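/- In the high temperature phase, the mixing time of the Glauber dynamics for the exponential random graph model is Θ(n² log n): there exist constants c, C > 0 and N such that for all n ≥ N the mixing time τ(n) satisfies c·n²·log n ≤ τ(n) ≤ C·n²·log n. -/

import Mathlib

open Finset

open scoped Classical

noncomputable section

/-- The set of edges of the complete graph `K_n` on vertex set `[n] = Fin n`:
unordered pairs of distinct vertices. -/
abbrev EdgeK (n : ℕ) : Type := {e : Sym2 (Fin n) // ¬ e.IsDiag}

/-- A graph on `[n]`, identified with an element `X ∈ {0,1}^{E(K_n)}`. -/
abbrev Config (n : ℕ) : Type := EdgeK n → Bool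

/-- The image of an edge under an injection of vertex sets. -/
def mapEdge {m n : ℕ} (v : Fin m ↪ Fin n) (a : EdgeK m) : EdgeK n :=
  ⟨a.1.map v, fun h => a.2 ((Sym2.isDiag_map v.injective).mp h)⟩

/-- The complete graph `K_n` as a configuration. -/
def fullConfig (n : ℕ) : Config n := fun _ => true

/-- `X ∪ {e}`. -/
def addEdge {n : ℕ} (X : Config n) (e : EdgeK n) : Config n :=
  fun f => if f = e then true else X f

/-- `X_{e+}` (for `b = true`), resp. `X_{e-}` (for `b = false`). -/
def setEdge {n : ℕ} (X : Config n) (e : EdgeK n) (b : Bool) : Config n :=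
  fun f => if f = e then b else X f

/-- `N_G(X)`: the number of tuples of `m` distinct vertices of `[n]` such that every
edge of the pattern graph `G` (a graph on `m` labelled vertices) is mapped to an edge of `X`. -/
def copyCount {n m : ℕ} (X : Config n) (G : Finset (EdgeK m)) : ℕ :=
  (univ.filter fun v : Fin m ↪ Fin n => ∀ a ∈ G, X (mapEdge v a) = true).card

/-- `N_G(X, e)`: the number of such tuples for `X ∪ {e}` which moreover use the edge `e`. -/
def rootedCount {n m : ℕ} (X : Config n) (G : Finset (EdgeK m)) (e : EdgeK n) : ℕ :=
  (univ.filter fun v : Fin m ↪ Fin n =>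
    (∃ a ∈ G, mapEdge v a = e) ∧ ∀ a ∈ G, addEdge X e (mapEdge v a) = true).card

/-- `N_G(X, e, e')`: the number of such tuples for `X ∪ {e, e'}` which use both `e` and `e'`. -/
def rooted2Count {n m : ℕ} (X : Config n) (G : Finset (EdgeK m)) (e e' : EdgeK n) : ℕ :=
  (univ.filter fun v : Fin m ↪ Fin n =>
    (∃ a ∈ G, mapEdge v a = e) ∧ (∃ a ∈ G, mapEdge v a = e') ∧
      ∀ a ∈ G, addEdge (addEdge X e) e' (mapEdge v a) = true).card

/-- The number of edges of the graph `X`. -/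
def edgeCount {n : ℕ} (X : Config n) : ℕ := (univ.filter fun e => X e = true).card

/-- Hamming distance between two graphs: the number of edges of disagreement. -/
def hamDist {n : ℕ} (X Y : Config n) : ℕ := (univ.filter fun f => X f ≠ Y f).card

/-- The Hamiltonian `H(X) = ∑ i, β i * N_{G_i}(X) / n^(|V_i| - 2)`. -/
def ergmH {s : ℕ} (V : Fin s → ℕ) (Pt : ∀ i, Finset (EdgeK (V i))) (β : Fin s → ℝ)
    (n : ℕ) (X : Config n) : ℝ :=
  ∑ i, β i * (copyCount X (Pt i) : ℝ) / (n : ℝ) ^ (V i - 2)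

/-- The Gibbs measure `p_n(X) = exp(H(X)) / Z_n`. -/
def gibbs {s : ℕ} (V : Fin s → ℕ) (Pt : ∀ i, Finset (EdgeK (V i))) (β : Fin s → ℝ)
    (n : ℕ) (X : Config n) : ℝ :=
  Real.exp (ergmH V Pt β n X) / ∑ Y : Config n, Real.exp (ergmH V Pt β n Y)

/-- `∂_e H(X) = H(X_{e+}) - H(X_{e-})`. -/
def dH {s : ℕ} (V : Fin s → ℕ) (Pt : ∀ i, Finset (EdgeK (V i))) (β : Fin s → ℝ)
    (n : ℕ) (X : Config n) (e : EdgeK n) : ℝ :=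
  ergmH V Pt β n (setEdge X e true) - ergmH V Pt β n (setEdge X e false)

/-- The transition kernel of the Glauber dynamics: a uniformly random edge `e` of `K_n` is
chosen and set present with probability `exp(∂_e H(X)) /(1 + exp(∂_e H(X)))`, absent
otherwise. -/
def glauber {s : ℕ} (V : Fin s → ℕ) (Pt : ∀ i, Finset (EdgeK (V i))) (β : Fin s → ℝ)
    (n : ℕ) (X Y : Config n) : ℝ :=
  ((n.choose 2 : ℝ))⁻¹ * ∑ e : EdgeK n,
    ((if Y = setEdge X e true then
        Real.exp (dH V Pt β n X e) / (1 + Real.exp (dH V Pt β n X e)) else 0)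
      + (if Y = setEdge X e false then 1 / (1 + Real.exp (dH V Pt β n X e)) else 0))

/-- The `t`-step distribution of the Markov chain with one-step kernel `K`,
started from a given state. -/
def kernelStep {n : ℕ} (K : Config n → Config n → ℝ) : ℕ → Config n → Config n → ℝ
  | 0 => fun x y => if y = x then 1 else 0
  | (t+1) => fun x y => ∑ z, kernelStep K t x z * K z y

/-- Total variation distance between two (signed) distributions on `Config n`. -/
def tvDist {n : ℕ} (μ ν : Config n → ℝ) : ℝ := (∑ Y, |μ Y - ν Y|) / 2

/-- `mixes K π t` says that after `t` steps the chain with kernel `K` is within total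
variation distance `e⁻¹` of `π` from every starting state. -/
def mixes {n : ℕ} (K : Config n → Config n → ℝ) (π : Config n → ℝ) (t : ℕ) : Prop :=
  ∀ x, tvDist (kernelStep K t x) π ≤ Real.exp (-1)

/-- The mixing time: the least `t` such that from every starting state the chain is within
total variation distance `e⁻¹` of `π`. -/
def mixingTime {n : ℕ} (K : Config n → Config n → ℝ) (π : Config n → ℝ) : ℕ :=
  sInf {t | mixes K π t}

/-- `Ψ(p) = ∑ i, 2 β_i |E_i| p^(|E_i| - 1)`. -/
def PsiF {s : ℕ} {V : Fin s → ℕ} (Pt : ∀ i, Finset (EdgeK (V i))) (β : Fin s → ℝ)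
    (p : ℝ) : ℝ :=
  ∑ i, 2 * β i * ((Pt i).card : ℝ) * p ^ ((Pt i).card - 1)

/-- `φ(p) = exp(Ψ(p)) / (1 + exp(Ψ(p)))`. -/
def phiF {s : ℕ} {V : Fin s → ℕ} (Pt : ∀ i, Finset (EdgeK (V i))) (β : Fin s → ℝ)
    (p : ℝ) : ℝ :=
  Real.exp (PsiF Pt β p) / (1 + Real.exp (PsiF Pt β p))

/-- High temperature phase: `φ(p) = p` has a unique solution `p*` (in `[0,1]`), which
moreover satisfies `φ'(p*) < 1`. -/
def HighTemp {s : ℕ} {V : Fin s → ℕ} (Pt : ∀ i, Finset (EdgeK (V i))) (β : Fin s → ℝ)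
    (pstar : ℝ) : Prop :=
  pstar ∈ Set.Icc (0:ℝ) 1 ∧ phiF Pt β pstar = pstar ∧
    (∀ q ∈ Set.Icc (0:ℝ) 1, phiF Pt β q = q → q = pstar) ∧
    deriv (phiF Pt β) pstar < 1

/-- Low temperature phase: `φ(p) = p` has at least two solutions `p` with `φ'(p) < 1`. -/
def LowTemp {s : ℕ} {V : Fin s → ℕ} (Pt : ∀ i, Finset (EdgeK (V i))) (β : Fin s → ℝ) : Prop :=
  ∃ p₁ p₂ : ℝ, p₁ ∈ Set.Icc (0:ℝ) 1 ∧ p₂ ∈ Set.Icc (0:ℝ) 1 ∧ p₁ ≠ p₂ ∧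
    phiF Pt β p₁ = p₁ ∧ phiF Pt β p₂ = p₂ ∧
    deriv (phiF Pt β) p₁ < 1 ∧ deriv (phiF Pt β) p₂ < 1

/-- `r_G(X, e) = (N_G(X,e) / (2 |E(G)| n^(|V(G)|-2)))^(1/(|E(G)|-1))`. -/
def rG {n m : ℕ} (X : Config n) (G : Finset (EdgeK m)) (e : EdgeK n) : ℝ :=
  ((rootedCount X G e : ℝ) / (2 * (G.card : ℝ) * (n : ℝ) ^ (m - 2))) ^ (((G.card : ℝ) - 1)⁻¹)

/-- The set of values `r_G(X,e)` over all edges `e` of `K_n` and all graphs `G` on at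
most `L` vertices with at least two edges. -/
def rSet (L n : ℕ) (X : Config n) : Set ℝ :=
  {r | ∃ m, m ≤ L ∧ ∃ G : Finset (EdgeK m), 2 ≤ G.card ∧ ∃ e : EdgeK n, r = rG X G e}

/-- `r̄(X)`: the maximum of `r_G(X,e)` over all edges `e` of `K_n` and all graphs `G` on
at most `L` vertices with at least two edges. -/
def rbar (L n : ℕ) (X : Config n) : ℝ := sSup (rSet L n X)

/-- `r_min(X)`: the corresponding minimum. -/
def rmin (L n : ℕ) (X : Config n) : ℝ := sInf (rSet L n X)

/-- The cycle `C_l` on `l` labelled vertices, as a pattern graph. -/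
def cyclePattern (l : ℕ) [NeZero l] : Finset (EdgeK l) :=
  univ.filter fun e => ∃ i : Fin l, e.1 = s(i, i + 1)

/-- The probability of a length-`T` trajectory `w` for the chain with kernel `K`
started at `x`. -/
def trajProb {n T : ℕ} (K : Config n → Config n → ℝ) (x : Config n)
    (w : Fin (T+1) → Config n) : ℝ :=
  (if w 0 = x then 1 else 0) * ∏ i : Fin T, K (w i.castSucc) (w i.succ)

/-- Two edges of `K_n` share a vertex. -/
def sharesVertex {n : ℕ} (e e' : EdgeK n) : Prop := ∃ v, v ∈ e.1 ∧ v ∈ e'.1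

end

/-!
At edge density `p` the local field of an edge is `Ψ(p)` up to the fluctuations of the rooted
subgraph counts, and these are concentrated under a Bernoulli measure by McDiarmid's inequality. So
as long as the graph is dominated by the Bernoulli measure of parameter `u`, up to a small error it
is updated with probability at most `φ(u) + o(1)`, and after `O(n² log n)` steps it is dominated by
the Bernoulli measure of that parameter; the same holds from below. Iterating from `u = 1` and
`u = 0` brings both bounds close to `p*`, from any initial state, because `p*` is the only fixed
point of `φ` and is attractive.

Near `p*` the total update probability grows with the number of edges at a rate below one, since
`φ'(p*) < 1`. For the monotone coupling of two chains the expected number of edges at which they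
differ then contracts by a factor `1 - κ / M` per step, where `M` is the number of edges of `K_n`,
and this gives the upper bound. No coupling has to be constructed: the heat-bath operator preserves
monotone functions, and this is all that a monotone coupling provides.

For the lower bound, the chain started from the complete graph stays above independent resampling
with a parameter close to `p*`. Up to time `c n² log n` the latter has an excess of edges over its
equilibrium which exceeds both the fluctuations and the uncertainty about the stationary density.
-/

noncomputable section

namespace HeatBath

open Function Matrix

/-! ### The heat-bath dynamics -/

section NumTrue

variable {ι : Type*} [Fintype ι]

/-- The number of sites at which the configuration is `true`. -/
def numTrue (x : ι → Bool) : ℝ := ∑ e, if x e then 1 else 0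

lemma numTrue_mono : Monotone (numTrue : (ι → Bool) → ℝ) := by
  intro x y hxy
  unfold numTrue
  gcongr with e
  have hbool := Bool.le_iff_imp.1 (hxy e)
  split_ifs with hx hy <;> simp_all

lemma numTrue_bot : numTrue (⊥ : ι → Bool) = 0 := by simp [numTrue]

lemma numTrue_top : numTrue (⊤ : ι → Bool) = Fintype.card ι := by simp [numTrue]

lemma numTrue_mem_Icc (x : ι → Bool) : numTrue x ∈ Set.Icc 0 (Fintype.card ι : ℝ) :=
  ⟨numTrue_bot.symm.trans_le (numTrue_mono bot_le), (numTrue_mono le_top).trans_eq numTrue_top⟩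

lemma numTrue_update [DecidableEq ι] (x : ι → Bool) (e : ι) (b : Bool) :
    numTrue (update x e b) = numTrue x - (if x e then 1 else 0) + if b then 1 else 0 := by
  simp only [numTrue, ← add_sum_erase univ _ (mem_univ e), update_self]
  rw [sum_congr rfl fun i hi => by rw [update_of_ne (ne_of_mem_erase hi)]]
  ring

lemma one_add_numTrue_le {x y : ι → Bool} (h : x < y) : 1 + numTrue x ≤ numTrue y := by
  obtain ⟨hle, e, he⟩ := Pi.lt_def.1 h
  obtain ⟨hx, hy⟩ := Bool.lt_iff.1 he
  have hxy : update x e true ≤ y := update_le_iff.2 ⟨hy.ge, fun j _ => hle j⟩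
  have := numTrue_mono hxy
  rw [numTrue_update] at this
  simpa [hx, add_comm] using this

lemma numTrue_add_sub_inf_le (x y : ι → Bool) :
    numTrue x + numTrue y - 2 * numTrue (x ⊓ y) ≤ Fintype.card ι := by
  simp only [numTrue, mul_sum, ← sum_add_distrib, ← sum_sub_distrib]
  refine (sum_le_card_nsmul univ _ 1 fun e _ => ?_).trans_eq (by simp)
  cases hx : x e <;> cases hy : y e <;> norm_num [hx, hy]

lemma inv_card_mem_Icc [Nonempty ι] : (Fintype.card ι : ℝ)⁻¹ ∈ Set.Icc (0 : ℝ) 1 :=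
  ⟨by positivity, inv_le_one_of_one_le₀ (Nat.one_le_cast.2 Fintype.card_pos)⟩

lemma card_mul_one_sub_inv_card_pow_nonneg [Nonempty ι] (t : ℕ) :
    0 ≤ Fintype.card ι * (1 - (Fintype.card ι : ℝ)⁻¹) ^ t :=
  mul_nonneg (Nat.cast_nonneg _) (pow_nonneg (sub_nonneg.2 inv_card_mem_Icc.2) t)

end NumTrue

section HeatBath

variable {ι : Type*}

/-- Resampling probabilities which increase with the configuration, as in a ferromagnet. -/
structure IsAttractive (σ : (ι → Bool) → ι → ℝ) : Prop where
  mem_Icc : ∀ x e, σ x e ∈ Set.Icc (0 : ℝ) 1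
  monotone : Monotone σ

lemma isAttractive_const {q : ℝ} (hq : q ∈ Set.Icc (0 : ℝ) 1) :
    IsAttractive (fun (_ : ι → Bool) (_ : ι) => q) :=
  ⟨fun _ _ => hq, monotone_const⟩

variable [DecidableEq ι] {σ σ' : (ι → Bool) → ι → ℝ} {f g : (ι → Bool) → ℝ}
  {x y : ι → Bool} {e : ι} {b : Bool}

/-- The Markov operator of resampling the site `e`, which becomes `true` with probability
`σ x e`. -/
def resample (σ : (ι → Bool) → ι → ℝ) (e : ι) : Module.End ℝ ((ι → Bool) → ℝ) where
  toFun f x := σ x e * f (update x e true) + (1 - σ x e) * f (update x e false)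
  map_add' f g := by ext x; simp only [Pi.add_apply]; ring
  map_smul' c f := by ext x; simp only [Pi.smul_apply, smul_eq_mul, RingHom.id_apply]; ring

/-- The Markov operator of the heat-bath (Glauber) dynamics: a uniformly random site is
resampled. The expectation of `f` after `t` steps from `x` is `(heatBath σ ^ t) f x`. -/
def heatBath [Fintype ι] (σ : (ι → Bool) → ι → ℝ) : Module.End ℝ ((ι → Bool) → ℝ) :=
  (Fintype.card ι : ℝ)⁻¹ • ∑ e, resample σ e

lemma resample_apply (σ : (ι → Bool) → ι → ℝ) (e : ι) (f : (ι → Bool) → ℝ) (x : ι → Bool) :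
    resample σ e f x = σ x e * f (update x e true) + (1 - σ x e) * f (update x e false) := rfl

lemma update_false_le_update_true (x : ι → Bool) (e : ι) : update x e false ≤ update x e true :=
  update_mono (Bool.false_le _)

lemma update_le_update (h : x ≤ y) : update x e b ≤ update y e b :=
  update_le_update_iff.2 ⟨le_rfl, fun j _ => h j⟩

lemma resample_mono (hσ : ∀ x e, σ x e ∈ Set.Icc (0 : ℝ) 1) (e : ι) :
    Monotone (resample σ e) := by
  intro f g hfg x
  exact add_le_add (mul_le_mul_of_nonneg_left (hfg _) (hσ x e).1)
    (mul_le_mul_of_nonneg_left (hfg _) (sub_nonneg.2 (hσ x e).2))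

lemma monotone_resample (hσ : IsAttractive σ) (hf : Monotone f) (e : ι) :
    Monotone (resample σ e f) := by
  intro x y hxy
  simp only [resample_apply]
  have hmono := hσ.monotone hxy e
  have htrue : f (update x e true) ≤ f (update y e true) := hf (update_le_update hxy)
  have hfalse : f (update x e false) ≤ f (update y e false) := hf (update_le_update hxy)
  have hflip := hf (update_false_le_update_true x e)
  nlinarith [mul_nonneg (hσ.mem_Icc y e).1 (sub_nonneg.2 htrue),
    mul_nonneg (sub_nonneg.2 (hσ.mem_Icc y e).2) (sub_nonneg.2 hfalse),
    mul_nonneg (sub_nonneg.2 hmono) (sub_nonneg.2 hflip)]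

section Fintype

variable [Fintype ι]

lemma heatBath_apply (σ : (ι → Bool) → ι → ℝ) (f : (ι → Bool) → ℝ) (x : ι → Bool) :
    heatBath σ f x = (Fintype.card ι : ℝ)⁻¹ * ∑ e, resample σ e f x := by
  simp [heatBath, LinearMap.sum_apply]

lemma heatBath_mono (hσ : ∀ x e, σ x e ∈ Set.Icc (0 : ℝ) 1) : Monotone (heatBath σ) := by
  intro f g hfg x
  simp only [heatBath_apply]
  gcongr with e
  exact resample_mono hσ e hfg x

lemma heatBath_pow_mono (hσ : ∀ x e, σ x e ∈ Set.Icc (0 : ℝ) 1) (t : ℕ) :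
    Monotone ⇑(heatBath σ ^ t) := by
  rw [Module.End.coe_pow]
  exact (heatBath_mono hσ).iterate t

lemma monotone_heatBath (hσ : IsAttractive σ) (hf : Monotone f) : Monotone (heatBath σ f) := by
  intro x y hxy
  simp only [heatBath_apply]
  gcongr with e
  exact monotone_resample hσ hf e hxy

lemma monotone_heatBath_pow (hσ : IsAttractive σ) (hf : Monotone f) (t : ℕ) :
    Monotone ((heatBath σ ^ t) f) := by
  induction t with
  | zero => simpa using hf
  | succ t ih => rw [pow_succ']; exact monotone_heatBath hσ ih

lemma heatBath_const [Nonempty ι] (σ : (ι → Bool) → ι → ℝ) (c : ℝ) :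
    heatBath σ (const _ c) = const _ c := by
  ext x
  have hcard : (Fintype.card ι : ℝ) ≠ 0 := Nat.cast_ne_zero.2 Fintype.card_ne_zero
  simp [heatBath_apply, resample_apply, ← add_mul, hcard]

lemma heatBath_pow_const [Nonempty ι] (σ : (ι → Bool) → ι → ℝ) (c : ℝ) (t : ℕ) :
    (heatBath σ ^ t) (const _ c) = const _ c := by
  rw [Module.End.coe_pow]
  exact iterate_fixed (heatBath_const σ c) t

lemma heatBath_pow_le_const [Nonempty ι] (hσ : ∀ x e, σ x e ∈ Set.Icc (0 : ℝ) 1) {c : ℝ}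
    (hf : ∀ x, f x ≤ c) (t : ℕ) (x : ι → Bool) : (heatBath σ ^ t) f x ≤ c := by
  have h := heatBath_pow_mono hσ t (show f ≤ const _ c from hf) x
  rwa [heatBath_pow_const] at h

lemma const_le_heatBath_pow [Nonempty ι] (hσ : ∀ x e, σ x e ∈ Set.Icc (0 : ℝ) 1) {c : ℝ}
    (hf : ∀ x, c ≤ f x) (t : ℕ) (x : ι → Bool) : c ≤ (heatBath σ ^ t) f x := by
  have h := heatBath_pow_mono hσ t (show const _ c ≤ f from hf) x
  rwa [heatBath_pow_const] at h

lemma resample_numTrue (σ : (ι → Bool) → ι → ℝ) (e : ι) (x : ι → Bool) :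
    resample σ e numTrue x = numTrue x - (if x e then 1 else 0) + σ x e := by
  simp only [resample_apply, numTrue_update, if_true, Bool.false_eq_true, if_false]
  ring

lemma heatBath_numTrue [Nonempty ι] (σ : (ι → Bool) → ι → ℝ) (x : ι → Bool) :
    heatBath σ numTrue x =
      (1 - (Fintype.card ι : ℝ)⁻¹) * numTrue x + (Fintype.card ι : ℝ)⁻¹ * ∑ e, σ x e := by
  have hcard : (Fintype.card ι : ℝ) ≠ 0 := Nat.cast_ne_zero.2 Fintype.card_ne_zero
  simp only [heatBath_apply, resample_numTrue, sum_add_distrib, sum_sub_distrib, sum_const,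
    card_univ, nsmul_eq_mul]
  change _ * (_ - numTrue x + _) = _
  field_simp

lemma heatBath_const_pow_numTrue [Nonempty ι] (q : ℝ) (t : ℕ) (x : ι → Bool) :
    (heatBath (fun (_ : ι → Bool) _ => q) ^ t) numTrue x =
      (1 - (Fintype.card ι : ℝ)⁻¹) ^ t * numTrue x +
        q * Fintype.card ι * (1 - (1 - (Fintype.card ι : ℝ)⁻¹) ^ t) := by
  induction t generalizing x with
  | zero => simp
  | succ t ih =>
    set r := 1 - (Fintype.card ι : ℝ)⁻¹ with hr
    have hcard : (Fintype.card ι : ℝ) ≠ 0 := Nat.cast_ne_zero.2 Fintype.card_ne_zero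
    have hih : (heatBath (fun (_ : ι → Bool) _ => q) ^ t) numTrue =
        r ^ t • numTrue + const _ (q * Fintype.card ι * (1 - r ^ t)) := by
      ext y; simp [ih y]
    rw [pow_succ', Module.End.mul_apply, hih, map_add, map_smul, heatBath_const, Pi.add_apply,
      Pi.smul_apply, heatBath_numTrue]
    simp only [sum_const, card_univ, nsmul_eq_mul, smul_eq_mul, const_apply, pow_succ, ← hr]
    rw [show r = 1 - (Fintype.card ι : ℝ)⁻¹ from hr]
    field_simp
    ring

-- Both `numTrue + f` and `numTrue - f` are increasing, and this is preserved by the dynamics.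
lemma abs_heatBath_pow_sub_le (hσ : IsAttractive σ) (hf : ∀ x, f x ∈ Set.Icc (0 : ℝ) 1) (t : ℕ)
    (hxy : x ≤ y) : |(heatBath σ ^ t) f y - (heatBath σ ^ t) f x| ≤
      (heatBath σ ^ t) numTrue y - (heatBath σ ^ t) numTrue x := by
  have hlip : ∀ ⦃x y : ι → Bool⦄, x ≤ y → |f y - f x| ≤ numTrue y - numTrue x := by
    intro x y hxy
    rcases hxy.eq_or_lt with rfl | hlt
    · simp
    · rw [abs_le]
      constructor <;> linarith [one_add_numTrue_le hlt, (hf x).1, (hf x).2, (hf y).1, (hf y).2]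
  have hadd : Monotone (numTrue + f) := fun x y h => by
    simp only [Pi.add_apply]; linarith [(abs_le.1 (hlip h)).1]
  have hsub : Monotone (numTrue - f) := fun x y h => by
    simp only [Pi.sub_apply]; linarith [(abs_le.1 (hlip h)).2]
  have h₁ := monotone_heatBath_pow hσ hadd t hxy
  have h₂ := monotone_heatBath_pow hσ hsub t hxy
  simp only [map_add, map_sub, Pi.add_apply, Pi.sub_apply] at h₁ h₂
  rw [abs_le]
  constructor <;> linarith

lemma heatBath_pow_sub_le (hσ : IsAttractive σ) (hf : ∀ x, f x ∈ Set.Icc (0 : ℝ) 1) (t : ℕ)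
    (x y : ι → Bool) : (heatBath σ ^ t) f x - (heatBath σ ^ t) f y ≤
      (heatBath σ ^ t) numTrue x + (heatBath σ ^ t) numTrue y
        - 2 * (heatBath σ ^ t) numTrue (x ⊓ y) := by
  have hx := abs_le.1 (abs_heatBath_pow_sub_le hσ hf t (inf_le_left : x ⊓ y ≤ x))
  have hy := abs_le.1 (abs_heatBath_pow_sub_le hσ hf t (inf_le_right : x ⊓ y ≤ y))
  linarith [hx.2, hy.1]

lemma heatBath_const_pow_sub_le [Nonempty ι] {q : ℝ} (hq : q ∈ Set.Icc (0 : ℝ) 1)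
    (hf : ∀ x, f x ∈ Set.Icc (0 : ℝ) 1) (t : ℕ) (x y : ι → Bool) :
    (heatBath (fun _ _ => q) ^ t) f x - (heatBath (fun _ _ => q) ^ t) f y ≤
      Fintype.card ι * (1 - (Fintype.card ι : ℝ)⁻¹) ^ t := by
  refine (heatBath_pow_sub_le (isAttractive_const hq) hf t x y).trans ?_
  simp only [heatBath_const_pow_numTrue]
  have hr : 0 ≤ (1 - (Fintype.card ι : ℝ)⁻¹) ^ t :=
    pow_nonneg (sub_nonneg.2 inv_card_mem_Icc.2) t
  linarith [mul_le_mul_of_nonneg_right (numTrue_add_sub_inf_le x y) hr]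

end Fintype

end HeatBath

section Simplex

lemma indicator_one_mem_Icc {X : Type*} (B : Set X) (x : X) :
    B.indicator (1 : X → ℝ) x ∈ Set.Icc (0 : ℝ) 1 :=
  ⟨Set.indicator_nonneg (fun _ _ => zero_le_one) x, Set.indicator_le_self' (by simp) x⟩

variable {X : Type*} [Fintype X] {μ f : X → ℝ} {c : ℝ}

lemma dotProduct_const_of_mem_stdSimplex (hμ : μ ∈ stdSimplex ℝ X) (c : ℝ) :
    μ ⬝ᵥ const X c = c := by
  simp [dotProduct, ← sum_mul, hμ.2]

lemma dotProduct_le_of_mem_stdSimplex (hμ : μ ∈ stdSimplex ℝ X) (hf : ∀ x, f x ≤ c) :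
    μ ⬝ᵥ f ≤ c :=
  (dotProduct_le_dotProduct_of_nonneg_left (show f ≤ const X c from hf) hμ.1).trans_eq
    (dotProduct_const_of_mem_stdSimplex hμ c)

lemma le_dotProduct_of_mem_stdSimplex (hμ : μ ∈ stdSimplex ℝ X) (hf : ∀ x, c ≤ f x) :
    c ≤ μ ⬝ᵥ f :=
  (dotProduct_const_of_mem_stdSimplex hμ c).symm.trans_le
    (dotProduct_le_dotProduct_of_nonneg_left (show const X c ≤ f from hf) hμ.1)

end Simplex

section Bernoulli

variable {ι : Type*} [Fintype ι]

/-- The law of a configuration with independent sites, each `true` with probability `p`. -/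
def bernoulliProd (p : ℝ) (x : ι → Bool) : ℝ := ∏ e, if x e then p else 1 - p

variable {p : ℝ}

lemma bernoulliProd_dotProduct_prod [DecidableEq ι] (p : ℝ) (h : ι → Bool → ℝ) :
    (bernoulliProd p ⬝ᵥ fun x => ∏ e, h e (x e)) =
      ∏ e, (p * h e true + (1 - p) * h e false) := by
  have hsum : ∀ e, p * h e true + (1 - p) * h e false =
      ∑ b : Bool, (if b then p else 1 - p) * h e b := fun e => by simp
  simp only [hsum, prod_univ_sum, Fintype.piFinset_univ, dotProduct, bernoulliProd,
    prod_mul_distrib]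

lemma bernoulliProd_mem_stdSimplex [DecidableEq ι] (hp : p ∈ Set.Icc (0 : ℝ) 1) :
    bernoulliProd p ∈ stdSimplex ℝ (ι → Bool) := by
  refine ⟨fun x => prod_nonneg fun e _ => ?_, ?_⟩
  · split_ifs
    exacts [hp.1, sub_nonneg.2 hp.2]
  · simpa [dotProduct] using bernoulliProd_dotProduct_prod p (fun (_ : ι) _ => 1)

lemma bernoulliProd_dotProduct_forall_mem [DecidableEq ι] (p : ℝ) (S : Finset ι) :
    (bernoulliProd p ⬝ᵥ fun x => if ∀ e ∈ S, x e = true then 1 else 0) = p ^ #S := by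
  have hprod : (fun x : ι → Bool => if ∀ e ∈ S, x e = true then (1 : ℝ) else 0) =
      fun x => ∏ e, if e ∈ S → x e = true then 1 else 0 := by
    ext x; simp [prod_boole]
  rw [hprod, bernoulliProd_dotProduct_prod p fun e b => if e ∈ S → b = true then 1 else 0,
    ← prod_subset (subset_univ S) fun e _ he => by simp [he],
    prod_congr rfl fun e he => show _ = p by simp [he], prod_const]

lemma bernoulliProd_dotProduct_numTrue [DecidableEq ι] (p : ℝ) :
    bernoulliProd p ⬝ᵥ (numTrue : (ι → Bool) → ℝ) = p * Fintype.card ι := by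
  have hsum : (numTrue : (ι → Bool) → ℝ) =
      ∑ e, fun x => if ∀ i ∈ ({e} : Finset ι), x i = true then 1 else 0 := by
    ext x; simp [numTrue]
  rw [hsum, dotProduct_sum]
  simp only [bernoulliProd_dotProduct_forall_mem, card_singleton, pow_one, sum_const, card_univ,
    nsmul_eq_mul, mul_comm]

lemma bernoulliProd_one : bernoulliProd 1 = (Pi.single ⊤ 1 : (ι → Bool) → ℝ) := by
  ext x
  simp [bernoulliProd, prod_boole, Pi.single_apply, funext_iff]

lemma bernoulliProd_zero : bernoulliProd 0 = (Pi.single ⊥ 1 : (ι → Bool) → ℝ) := by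
  ext x
  have hnot : ∀ e, (if x e then (0 : ℝ) else 1 - 0) = if x e = false then 1 else 0 :=
    fun e => by cases x e <;> simp
  simp only [bernoulliProd, hnot, prod_boole, Pi.single_apply, funext_iff, mem_univ, true_imp_iff,
    Pi.bot_apply, bot_eq_false]

end Bernoulli

section Stationary

variable {ι : Type*} [Fintype ι] [DecidableEq ι]
  {σ : (ι → Bool) → ι → ℝ} {w : (ι → Bool) → ℝ} {e : ι}

lemma sum_update_true_add_update_false (e : ι) (g : (ι → Bool) → ℝ) :
    ∑ x, (g (update x e true) + g (update x e false)) = 2 * ∑ x, g x := by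
  have hflip : Involutive fun x : ι → Bool => update x e (!x e) := fun x => by simp
  have hsum : ∑ x, g (update x e (!x e)) = ∑ x, g x := hflip.bijective.sum_comp g
  calc ∑ x, (g (update x e true) + g (update x e false))
      = ∑ x, (g x + g (update x e (!x e))) := sum_congr rfl fun x _ => by
        nth_rewrite 3 [← update_eq_self e x]
        cases x e <;> simp [add_comm]
    _ = 2 * ∑ x, g x := by rw [sum_add_distrib, hsum, two_mul]

lemma dotProduct_resample (hσ : ∀ x b, σ (update x e b) e = σ x e)
    (hw : ∀ x, w (update x e true) * (1 - σ x e) = w (update x e false) * σ x e)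
    (f : (ι → Bool) → ℝ) : w ⬝ᵥ resample σ e f = w ⬝ᵥ f := by
  refine mul_left_cancel₀ (two_ne_zero' ℝ) ?_
  simp only [dotProduct, ← sum_update_true_add_update_false e]
  refine sum_congr rfl fun x _ => ?_
  simp only [resample_apply, hσ, update_idem]
  linear_combination (f (update x e false) - f (update x e true)) * hw x

lemma dotProduct_heatBath_pow [Nonempty ι] (hσ : ∀ x e b, σ (update x e b) e = σ x e)
    (hw : ∀ x e, w (update x e true) * (1 - σ x e) = w (update x e false) * σ x e) (t : ℕ)
    (f : (ι → Bool) → ℝ) : w ⬝ᵥ (heatBath σ ^ t) f = w ⬝ᵥ f := by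
  induction t with
  | zero => simp
  | succ t ih =>
    have hcard : (Fintype.card ι : ℝ) ≠ 0 := Nat.cast_ne_zero.2 Fintype.card_ne_zero
    have hstep : heatBath σ = (Fintype.card ι : ℝ)⁻¹ • ∑ e, resample σ e := rfl
    rw [pow_succ', Module.End.mul_apply]
    nth_rewrite 1 [hstep]
    rw [LinearMap.smul_apply, LinearMap.sum_apply, dotProduct_smul, dotProduct_sum,
      sum_congr rfl fun e _ => dotProduct_resample (hσ · e) (hw · e) _]
    simp only [ih, sum_const, card_univ, nsmul_eq_mul, smul_eq_mul]
    field_simp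

lemma bernoulliProd_detailed_balance (p : ℝ) (x : ι → Bool) (e : ι) :
    bernoulliProd p (update x e true) * (1 - p) = bernoulliProd p (update x e false) * p := by
  have hoff (b : Bool) : bernoulliProd p (update x e b) =
      (if b then p else 1 - p) * ∏ i ∈ univ.erase e, if x i then p else 1 - p := by
    rw [bernoulliProd, ← mul_prod_erase univ _ (mem_univ e), update_self,
      prod_congr rfl fun i hi => by rw [update_of_ne (ne_of_mem_erase hi)]]
  simp only [hoff, if_true, Bool.false_eq_true, if_false]
  ring

lemma bernoulliProd_dotProduct_resample (p : ℝ) (e : ι) (f : (ι → Bool) → ℝ) :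
    bernoulliProd p ⬝ᵥ resample (fun _ _ => p) e f = bernoulliProd p ⬝ᵥ f :=
  dotProduct_resample (fun _ _ => rfl) (bernoulliProd_detailed_balance p · e) f

end Stationary

/-! ### Burn-in -/

section Comparison

variable {ι : Type*} [Fintype ι] [DecidableEq ι]
  {σ σ' : (ι → Bool) → ι → ℝ} {f g : (ι → Bool) → ℝ}

lemma heatBath_le_add_indicator [Nonempty ι] (hσ : ∀ x e, σ x e ∈ Set.Icc (0 : ℝ) 1)
    (hσ' : ∀ x e, σ' x e ∈ Set.Icc (0 : ℝ) 1) (hf : ∀ x, f x ∈ Set.Icc (0 : ℝ) 1)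
    {B : Set (ι → Bool)}
    (hB : ∀ x ∉ B, ∀ e, (σ x e - σ' x e) * (f (update x e true) - f (update x e false)) ≤ 0) :
    heatBath σ f ≤ heatBath σ' f + B.indicator 1 := by
  intro x
  by_cases hx : x ∈ B
  · have hle := heatBath_pow_le_const hσ (fun x => (hf x).2) 1 x
    have hge := const_le_heatBath_pow hσ' (fun x => (hf x).1) 1 x
    simp only [pow_one] at hle hge
    simp only [Pi.add_apply, Set.indicator_of_mem hx, Pi.one_apply]
    linarith
  · simp only [Pi.add_apply, Set.indicator_of_notMem hx, add_zero, heatBath_apply]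
    gcongr with e
    rw [resample_apply, resample_apply]
    linarith [hB x hx e]

lemma heatBath_pow_le_add_sum (hσ : ∀ x e, σ x e ∈ Set.Icc (0 : ℝ) 1) {T : ℕ}
    (h : ∀ r < T, heatBath σ ((heatBath σ' ^ r) f) ≤ (heatBath σ' ^ (r + 1)) f + g) :
    (heatBath σ ^ T) f ≤ (heatBath σ' ^ T) f + ∑ r ∈ range T, (heatBath σ ^ r) g := by
  induction T with
  | zero => simp
  | succ T ih =>
    have hmono := heatBath_mono hσ (ih fun r hr => h r (hr.trans T.lt_succ_self))
    rw [map_add, map_sum] at hmono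
    rw [sum_range_succ', pow_succ', Module.End.mul_apply, ← add_assoc, add_right_comm]
    refine hmono.trans (add_le_add ((h T T.lt_succ_self).trans_eq ?_) (le_of_eq ?_))
    · simp
    · exact sum_congr rfl fun r _ => by rw [pow_succ', Module.End.mul_apply]

lemma heatBath_const_pow_le_bernoulliProd [Nonempty ι] {q : ℝ} (hq : q ∈ Set.Icc (0 : ℝ) 1)
    (hf : ∀ x, f x ∈ Set.Icc (0 : ℝ) 1) (t : ℕ) (x : ι → Bool) :
    (heatBath (fun _ _ => q) ^ t) f x ≤
      bernoulliProd q ⬝ᵥ f + Fintype.card ι * (1 - (Fintype.card ι : ℝ)⁻¹) ^ t := by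
  have hstat := dotProduct_heatBath_pow (w := bernoulliProd q) (σ := fun (_ : ι → Bool) _ => q)
    (fun _ _ _ => rfl) (bernoulliProd_detailed_balance q) t f
  rw [← hstat, ← sub_le_iff_le_add]
  exact le_dotProduct_of_mem_stdSimplex (bernoulliProd_mem_stdSimplex hq) fun y => by
    linarith [heatBath_const_pow_sub_le hq hf t x y]

end Comparison

section Burnin

variable {ι : Type*} [Fintype ι] [DecidableEq ι]

/-- Up to an error `ε`, the heat-bath dynamics at time `t` is stochastically dominated by the
Bernoulli measure of parameter `p` if `s = 1`, and dominates it if `s = -1`, uniformly in the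
starting configuration. -/
def DominatedByBernoulli (σ : (ι → Bool) → ι → ℝ) (s : ℝ) (t : ℕ) (p ε : ℝ) : Prop :=
  ∀ f : (ι → Bool) → ℝ, (∀ x, f x ∈ Set.Icc (0 : ℝ) 1) → Monotone (s • f) →
    ∀ x, (heatBath σ ^ t) f x ≤ bernoulliProd p ⬝ᵥ f + ε

variable {σ : (ι → Bool) → ι → ℝ} {s p q ε τ ρ : ℝ} {t T : ℕ} {B : Set (ι → Bool)}

lemma dominatedByBernoulli_zero (hs : s = 1 ∨ s = -1) :
    DominatedByBernoulli σ s 0 ((1 + s) / 2) 0 := by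
  intro f _ hmono x
  rcases hs with rfl | rfl
  · simpa [bernoulliProd_one] using hmono (le_top : x ≤ ⊤)
  · simpa [bernoulliProd_zero] using hmono (bot_le : ⊥ ≤ x)

lemma monotone_smul_heatBath_const_pow (hq : q ∈ Set.Icc (0 : ℝ) 1) {f : (ι → Bool) → ℝ}
    (hf : Monotone (s • f)) (t : ℕ) : Monotone (s • (heatBath (fun _ _ => q) ^ t) f) := by
  rw [← map_smul]
  exact monotone_heatBath_pow (isAttractive_const hq) hf t

variable [Nonempty ι]

lemma DominatedByBernoulli.mono_time (h : DominatedByBernoulli σ s t p ε)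
    (hσ : ∀ x e, σ x e ∈ Set.Icc (0 : ℝ) 1) (htT : t ≤ T) : DominatedByBernoulli σ s T p ε := by
  intro f hf hmono x
  rw [← Nat.sub_add_cancel htT, pow_add, Module.End.mul_apply]
  exact heatBath_pow_le_const hσ (h f hf hmono) _ x

lemma heatBath_pow_le_heatBath_const_pow_add_sum (hs : s = 1 ∨ s = -1)
    (hσ : ∀ x e, σ x e ∈ Set.Icc (0 : ℝ) 1) (hq : q ∈ Set.Icc (0 : ℝ) 1)
    (hB : ∀ x ∉ B, ∀ e, s * (σ x e - q) ≤ 0) {f : (ι → Bool) → ℝ}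
    (hf : ∀ x, f x ∈ Set.Icc (0 : ℝ) 1) (hmono : Monotone (s • f)) (T : ℕ) :
    (heatBath σ ^ T) f ≤
      (heatBath (fun _ _ => q) ^ T) f + ∑ r ∈ range T, (heatBath σ ^ r) (B.indicator 1) := by
  refine heatBath_pow_le_add_sum hσ fun r _ => ?_
  rw [pow_succ', Module.End.mul_apply]
  set g := (heatBath (fun (_ : ι → Bool) _ => q) ^ r) f
  have hg : ∀ x, g x ∈ Set.Icc (0 : ℝ) 1 := fun x =>
    ⟨const_le_heatBath_pow (fun _ _ => hq) (fun x => (hf x).1) r x,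
      heatBath_pow_le_const (fun _ _ => hq) (fun x => (hf x).2) r x⟩
  refine heatBath_le_add_indicator hσ (fun _ _ => hq) hg fun x hx e => ?_
  have hflip : 0 ≤ s * (g (update x e true) - g (update x e false)) := by
    rw [mul_sub, sub_nonneg]
    exact monotone_smul_heatBath_const_pow hq hmono r (update_false_le_update_true x e)
  have hsq : s * s = 1 := by rcases hs with rfl | rfl <;> norm_num
  linear_combination mul_nonpos_of_nonpos_of_nonneg (hB x hx e) hflip -
    (σ x e - q) * (g (update x e true) - g (update x e false)) * hsq

-- Off `B` the dynamics compares with independent resampling at rate `q`, which mixes within `T`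
-- steps up to `ρ`; each visit to `B` costs at most `1`.
lemma DominatedByBernoulli.add (h : DominatedByBernoulli σ s t p ε)
    (hs : s = 1 ∨ s = -1) (hσ : ∀ x e, σ x e ∈ Set.Icc (0 : ℝ) 1) (hq : q ∈ Set.Icc (0 : ℝ) 1)
    (hB : ∀ x ∉ B, ∀ e, s * (σ x e - q) ≤ 0)
    (hBmono : Monotone (s • B.indicator (1 : (ι → Bool) → ℝ)))
    (hBp : bernoulliProd p ⬝ᵥ B.indicator 1 ≤ τ)
    (hρ : Fintype.card ι * (1 - (Fintype.card ι : ℝ)⁻¹) ^ T ≤ ρ) :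
    DominatedByBernoulli σ s (t + T) q (T * (ε + τ) + ρ) := by
  intro f hf hmono x
  have hindep : (heatBath σ ^ t) ((heatBath (fun _ _ => q) ^ T) f) x ≤
      bernoulliProd q ⬝ᵥ f + ρ :=
    heatBath_pow_le_const hσ
      (fun y => (heatBath_const_pow_le_bernoulliProd hq hf T y).trans (by linarith)) t x
  have hvisit (r : ℕ) : (heatBath σ ^ t) ((heatBath σ ^ r) (B.indicator 1)) x ≤ ε + τ := by
    rw [← Module.End.mul_apply, ← pow_add]
    linarith [h.mono_time hσ (t.le_add_right r) _ (indicator_one_mem_Icc B) hBmono x]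
  rw [pow_add, Module.End.mul_apply]
  refine (heatBath_pow_mono hσ t
    (heatBath_pow_le_heatBath_const_pow_add_sum hs hσ hq hB hf hmono T) x).trans ?_
  rw [map_add, map_sum, Pi.add_apply, Finset.sum_apply]
  have hsum := sum_le_card_nsmul (range T) _ _ fun r _ => hvisit r
  rw [card_range, nsmul_eq_mul] at hsum
  linarith

end Burnin

section Staircase

variable {ι : Type*} [Fintype ι] [DecidableEq ι]

/-- A sequence of Bernoulli parameters `u k` along which domination propagates, downwards from
`1` if `s = 1` and upwards from `0` if `s = -1`: outside the event `B k`, which has probability at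
most `τ` under the parameter `u k`, all resampling probabilities are on the right side of
`u (k + 1)`. -/
structure IsStaircase (σ : (ι → Bool) → ι → ℝ) (s : ℝ) (u : ℕ → ℝ) (B : ℕ → Set (ι → Bool))
    (τ : ℝ) : Prop where
  sign : s = 1 ∨ s = -1
  zero : u 0 = (1 + s) / 2
  mem_Icc : ∀ k, u k ∈ Set.Icc (0 : ℝ) 1
  rate_le : ∀ k, ∀ x ∉ B k, ∀ e, s * (σ x e - u (k + 1)) ≤ 0
  monotone_indicator : ∀ k, Monotone (s • (B k).indicator (1 : (ι → Bool) → ℝ))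
  prob_le : ∀ k, bernoulliProd (u k) ⬝ᵥ (B k).indicator (1 : (ι → Bool) → ℝ) ≤ τ

namespace IsStaircase

variable {σ : (ι → Bool) → ι → ℝ} {s τ ρ : ℝ} {T : ℕ} {u : ℕ → ℝ} {B : ℕ → Set (ι → Bool)}

lemma nonneg (h : IsStaircase σ s u B τ) : 0 ≤ τ :=
  (le_dotProduct_of_mem_stdSimplex (bernoulliProd_mem_stdSimplex (h.mem_Icc 0)) fun x =>
    (indicator_one_mem_Icc _ x).1).trans (h.prob_le 0)

variable [Nonempty ι]

lemma dominatedByBernoulli (h : IsStaircase σ s u B τ)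
    (hσ : ∀ x e, σ x e ∈ Set.Icc (0 : ℝ) 1) (hT : 1 ≤ T)
    (hρ : Fintype.card ι * (1 - (Fintype.card ι : ℝ)⁻¹) ^ T ≤ ρ) (k : ℕ) :
    DominatedByBernoulli σ s (k * T) (u k) ((2 * T) ^ k * (τ + ρ) - (τ + ρ)) := by
  have hT' : (1 : ℝ) ≤ T := Nat.one_le_cast.2 hT
  have hρ₀ := (card_mul_one_sub_inv_card_pow_nonneg T).trans hρ
  induction k with
  | zero => simpa [h.zero] using dominatedByBernoulli_zero h.sign
  | succ k ih =>
    intro f hf hmono x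
    have hstep := ih.add h.sign hσ (h.mem_Icc (k + 1)) (h.rate_le k) (h.monotone_indicator k)
      (h.prob_le k) hρ f hf hmono x
    rw [← add_one_mul] at hstep
    refine hstep.trans ?_
    have hpow : 1 * (τ + ρ) ≤ T * (2 * T) ^ k * (τ + ρ) :=
      mul_le_mul_of_nonneg_right (one_le_mul_of_one_le_of_one_le hT'
        (one_le_pow₀ (by linarith))) (add_nonneg h.nonneg hρ₀)
    rw [pow_succ]
    nlinarith [mul_le_mul_of_nonneg_right hT' hρ₀]

lemma heatBath_pow_indicator_le (h : IsStaircase σ s u B τ)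
    (hσ : ∀ x e, σ x e ∈ Set.Icc (0 : ℝ) 1) (hT : 1 ≤ T)
    (hρ : Fintype.card ι * (1 - (Fintype.card ι : ℝ)⁻¹) ^ T ≤ ρ) {k r : ℕ} (hr : k * T ≤ r)
    (x : ι → Bool) :
    (heatBath σ ^ r) ((B k).indicator 1) x ≤ (2 * T) ^ k * (τ + ρ) := by
  have hρ₀ := (card_mul_one_sub_inv_card_pow_nonneg T).trans hρ
  have hdom := (h.dominatedByBernoulli hσ hT hρ k).mono_time hσ hr _
    (indicator_one_mem_Icc _) (h.monotone_indicator k) x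
  linarith [h.prob_le k]

end IsStaircase

end Staircase

/-! ### Contraction and fluctuations -/

section Contraction

lemma exists_monotone_abs_sub_le {X : Type*} [Preorder X] {h : X → ℝ} {B : Set X} {C : ℝ}
    (hmono : MonotoneOn h Bᶜ) (hC : ∀ x, |h x| ≤ C) :
    ∃ g : X → ℝ, Monotone g ∧ ∀ x, |h x - g x| ≤ 2 * C * B.indicator 1 x := by
  have hbdd : ∀ x, h x ∈ Set.Icc (-C) C := fun x => abs_le.1 (hC x)
  set S : X → Set ℝ := fun x => insert (-C) (h '' (Set.Iic x \ B))
  have hSC : ∀ x, C ∈ upperBounds (S x) := by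
    rintro x _ (rfl | ⟨y, -, rfl⟩)
    exacts [(hbdd x).1.trans (hbdd x).2, (hbdd y).2]
  refine ⟨fun x => sSup (S x), fun x y hxy => ?_, fun x => ?_⟩
  · refine csSup_le_csSup ⟨C, hSC y⟩ ⟨-C, Set.mem_insert _ _⟩ ?_
    exact Set.insert_subset_insert
      (Set.image_mono (Set.sdiff_subset_sdiff_left (Set.Iic_subset_Iic.2 hxy)))
  · by_cases hx : x ∈ B
    · have hle : sSup (S x) ≤ C := csSup_le ⟨-C, Set.mem_insert _ _⟩ (hSC x)
      have hge : -C ≤ sSup (S x) := le_csSup ⟨C, hSC x⟩ (Set.mem_insert _ _)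
      rw [Set.indicator_of_mem hx, Pi.one_apply, abs_le]
      constructor <;> linarith [(hbdd x).1, (hbdd x).2]
    · have hgreatest : IsGreatest (S x) (h x) := by
        refine ⟨Set.mem_insert_of_mem _ ⟨x, ⟨le_rfl, hx⟩, rfl⟩, ?_⟩
        rintro _ (rfl | ⟨y, ⟨hyx, hy⟩, rfl⟩)
        exacts [(hbdd x).1, hmono hy hx hyx]
      simp [hgreatest.csSup_eq, hx]

variable {ι : Type*} [Fintype ι] [DecidableEq ι] {σ : (ι → Bool) → ι → ℝ}
  {x y : ι → Bool} {B : Set (ι → Bool)} {κ η : ℝ} {t₀ t : ℕ}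

lemma heatBath_pow_le_of_monotoneOn (hσ : IsAttractive σ) {h : (ι → Bool) → ℝ} {C : ℝ}
    (hmono : MonotoneOn h Bᶜ) (hC : ∀ x, |h x| ≤ C) (t : ℕ) (hxy : x ≤ y) :
    (heatBath σ ^ t) h x ≤ (heatBath σ ^ t) h y +
      2 * C * ((heatBath σ ^ t) (B.indicator 1) x + (heatBath σ ^ t) (B.indicator 1) y) := by
  obtain ⟨g, hg, hgh⟩ := exists_monotone_abs_sub_le hmono hC
  have hle : h ≤ g + (2 * C) • B.indicator 1 := fun x => by
    simpa [add_comm] using sub_le_iff_le_add.1 (abs_le.1 (hgh x)).2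
  have hge : g ≤ h + (2 * C) • B.indicator 1 := fun x => by
    have := (abs_le.1 (hgh x)).1
    simp only [Pi.add_apply, Pi.smul_apply, smul_eq_mul]
    linarith
  have hx := heatBath_pow_mono hσ.mem_Icc t hle x
  have hy := heatBath_pow_mono hσ.mem_Icc t hge y
  simp only [map_add, map_smul, Pi.add_apply, Pi.smul_apply, smul_eq_mul] at hx hy
  linarith [monotone_heatBath_pow hσ hg t hxy]

variable [Nonempty ι]

-- `(1 - κ) * numTrue - ∑ e, σ · e` is increasing off `B`, so it may be replaced by an increasing
-- function at the cost of the visits to `B`.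
lemma heatBath_pow_succ_numTrue_sub_le (hσ : IsAttractive σ) (hκ : κ ∈ Set.Icc (0 : ℝ) 1)
    (hB : ∀ x ∉ B, ∀ y ∉ B, x ≤ y →
      ∑ e, σ y e - ∑ e, σ x e ≤ (1 - κ) * (numTrue y - numTrue x)) (t : ℕ) (hxy : x ≤ y) :
    (heatBath σ ^ (t + 1)) numTrue y - (heatBath σ ^ (t + 1)) numTrue x ≤
      (1 - κ / Fintype.card ι) * ((heatBath σ ^ t) numTrue y - (heatBath σ ^ t) numTrue x) +
        2 * ((heatBath σ ^ t) (B.indicator 1) x + (heatBath σ ^ t) (B.indicator 1) y) := by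
  set M := (Fintype.card ι : ℝ) with hM
  have hM₀ : 0 < M := Nat.cast_pos.2 Fintype.card_pos
  set h : (ι → Bool) → ℝ := (1 - κ) • numTrue - fun x => ∑ e, σ x e with hh
  have hmono : MonotoneOn h Bᶜ := fun x hx y hy hxy => by
    simp only [hh, Pi.sub_apply, Pi.smul_apply, smul_eq_mul]
    linarith [hB x hx y hy hxy]
  have hbdd : ∀ x, |h x| ≤ M := fun x => by
    have hsum₀ : 0 ≤ ∑ e, σ x e := sum_nonneg fun e _ => (hσ.mem_Icc x e).1
    have hsum₁ : ∑ e, σ x e ≤ M :=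
      (sum_le_card_nsmul univ _ 1 fun e _ => (hσ.mem_Icc x e).2).trans_eq (by simp [hM])
    obtain ⟨hN₀, hN₁⟩ := numTrue_mem_Icc x
    simp only [hh, Pi.sub_apply, Pi.smul_apply, smul_eq_mul]
    rw [abs_le]
    constructor <;> nlinarith [hκ.1, hκ.2]
  have hstep : heatBath σ numTrue = (1 - κ / M) • numTrue - M⁻¹ • h := by
    ext x
    simp only [heatBath_numTrue, hh, Pi.sub_apply, Pi.smul_apply, smul_eq_mul, ← hM]
    ring
  have hmain := heatBath_pow_le_of_monotoneOn hσ hmono hbdd t hxy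
  simp only [pow_succ, Module.End.mul_apply, hstep, map_sub, map_smul, Pi.sub_apply,
    Pi.smul_apply, smul_eq_mul]
  have hscaled := mul_le_mul_of_nonneg_left hmain (inv_nonneg.2 hM₀.le)
  have hinv : M⁻¹ * M = 1 := inv_mul_cancel₀ hM₀.ne'
  linear_combination hscaled +
    2 * ((heatBath σ ^ t) (B.indicator 1) x + (heatBath σ ^ t) (B.indicator 1) y) * hinv

lemma heatBath_pow_add_numTrue_sub_le (hσ : IsAttractive σ) (hκ : κ ∈ Set.Icc (0 : ℝ) 1)
    (hB : ∀ x ∉ B, ∀ y ∉ B, x ≤ y →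
      ∑ e, σ y e - ∑ e, σ x e ≤ (1 - κ) * (numTrue y - numTrue x))
    (hη : ∀ r ≥ t₀, ∀ x, (heatBath σ ^ r) (B.indicator 1) x ≤ η) (t : ℕ) (hxy : x ≤ y) :
    (heatBath σ ^ (t₀ + t)) numTrue y - (heatBath σ ^ (t₀ + t)) numTrue x ≤
      (1 - κ / Fintype.card ι) ^ t * Fintype.card ι + 4 * t * η := by
  have hcard : (1 : ℝ) ≤ Fintype.card ι := Nat.one_le_cast.2 Fintype.card_pos
  have hfac₀ : 0 ≤ 1 - κ / Fintype.card ι :=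
    sub_nonneg.2 (div_le_one_of_le₀ (hκ.2.trans hcard) (by linarith))
  have hfac₁ : 1 - κ / Fintype.card ι ≤ 1 := sub_le_self _ (div_nonneg hκ.1 (by linarith))
  have hη₀ : 0 ≤ η := le_trans
    (const_le_heatBath_pow hσ.mem_Icc (fun x => (indicator_one_mem_Icc B x).1) t₀ x)
    (hη t₀ le_rfl x)
  induction t with
  | zero =>
    have hx := const_le_heatBath_pow hσ.mem_Icc (fun x => (numTrue_mem_Icc x).1) t₀ x
    have hy := heatBath_pow_le_const hσ.mem_Icc (fun x => (numTrue_mem_Icc x).2) t₀ y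
    simp only [Nat.add_zero, pow_zero, Nat.cast_zero]
    linarith
  | succ t ih =>
    have hstep := heatBath_pow_succ_numTrue_sub_le hσ hκ hB (t₀ + t) hxy
    have hx := hη (t₀ + t) le_self_add x
    have hy := hη (t₀ + t) le_self_add y
    have hih := mul_le_mul_of_nonneg_left ih hfac₀
    have hdrop := mul_le_mul_of_nonneg_right hfac₁ (show 0 ≤ 4 * t * η by positivity)
    rw [← Nat.add_assoc, pow_succ (1 - _)]
    push_cast
    linarith

lemma heatBath_pow_sub_le_of_contraction (hσ : IsAttractive σ) (hκ : κ ∈ Set.Icc (0 : ℝ) 1)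
    (hB : ∀ x ∉ B, ∀ y ∉ B, x ≤ y →
      ∑ e, σ y e - ∑ e, σ x e ≤ (1 - κ) * (numTrue y - numTrue x))
    (hη : ∀ r ≥ t₀, ∀ x, (heatBath σ ^ r) (B.indicator 1) x ≤ η) (t : ℕ)
    {f : (ι → Bool) → ℝ} (hf : ∀ x, f x ∈ Set.Icc (0 : ℝ) 1) (x y : ι → Bool) :
    (heatBath σ ^ (t₀ + t)) f x - (heatBath σ ^ (t₀ + t)) f y ≤
      2 * ((1 - κ / Fintype.card ι) ^ t * Fintype.card ι + 4 * t * η) := by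
  linarith [heatBath_pow_sub_le hσ hf (t₀ + t) x y,
    heatBath_pow_add_numTrue_sub_le hσ hκ hB hη t (inf_le_left : x ⊓ y ≤ x),
    heatBath_pow_add_numTrue_sub_le hσ hκ hB hη t (inf_le_right : x ⊓ y ≤ y)]

end Contraction

section Fluctuation

variable {ι : Type*} [Fintype ι] [DecidableEq ι] [Nonempty ι] {q θ d : ℝ}

lemma heatBath_const_sq_numTrue_sub_le (q b : ℝ) (x : ι → Bool) :
    heatBath (fun _ _ => q)
        (fun x => (numTrue x - ((1 - (Fintype.card ι : ℝ)⁻¹) * b + q)) ^ 2) x ≤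
      (numTrue x - b) ^ 2 + 1 := by
  set M := (Fintype.card ι : ℝ)
  have hM₀ : 0 < M := Nat.cast_pos.2 Fintype.card_pos
  set c := (1 - M⁻¹) * b + q with hc
  set a := M⁻¹ * numTrue x with ha
  have hexact : heatBath (fun _ _ => q) (fun x => (numTrue x - c) ^ 2) x =
      ((1 - M⁻¹) * (numTrue x - b)) ^ 2 + (q * (1 - q) + a * (1 - a)) := by
    have hresample (e : ι) : resample (fun _ _ => q) e (fun x => (numTrue x - c) ^ 2) x =
        (numTrue x - c) ^ 2 + q * (2 * (numTrue x - c) + 1) -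
          (2 * (numTrue x - c) - 1 + 2 * q) * if x e then 1 else 0 := by
      simp only [resample_apply, numTrue_update, if_true, Bool.false_eq_true, if_false]
      split_ifs <;> ring
    simp only [heatBath_apply, hresample, sum_sub_distrib, sum_const, card_univ, nsmul_eq_mul,
      ← mul_sum]
    change M⁻¹ * (M * _ - _ * numTrue x) = _
    rw [mul_sub, inv_mul_cancel_left₀ hM₀.ne', mul_left_comm, ← ha,
      show numTrue x - c = (1 - M⁻¹) * (numTrue x - b) + a - q by rw [ha, hc]; ring]
    ring
  have hinv : M⁻¹ ∈ Set.Icc (0 : ℝ) 1 := inv_card_mem_Icc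
  have hcontract : ((1 - M⁻¹) * (numTrue x - b)) ^ 2 ≤ (numTrue x - b) ^ 2 := by
    rw [mul_pow]
    exact mul_le_of_le_one_left (sq_nonneg _)
      (pow_le_one₀ (sub_nonneg.2 hinv.2) (sub_le_self _ hinv.1))
  rw [hexact]
  nlinarith [sq_nonneg (q - 1 / 2), sq_nonneg (a - 1 / 2)]

lemma heatBath_const_pow_sq_numTrue_sub_le (hq : q ∈ Set.Icc (0 : ℝ) 1) (t : ℕ) :
    (heatBath (fun _ _ => q) ^ t)
        (fun x : ι → Bool => (numTrue x - (q * Fintype.card ι +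
          (1 - q) * Fintype.card ι * (1 - (Fintype.card ι : ℝ)⁻¹) ^ t)) ^ 2) ⊤ ≤ t := by
  induction t with
  | zero => simp [numTrue_top, ← add_mul]
  | succ t ih =>
    set M := (Fintype.card ι : ℝ)
    have hM₀ : M ≠ 0 := Nat.cast_ne_zero.2 Fintype.card_ne_zero
    set b := q * M + (1 - q) * M * (1 - M⁻¹) ^ t
    have hmean : q * M + (1 - q) * M * (1 - M⁻¹) ^ (t + 1) = (1 - M⁻¹) * b + q := by
      simp only [b, pow_succ]
      field_simp
      ring
    have hstep := heatBath_pow_mono (fun _ _ => hq) t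
      (show _ ≤ (fun x : ι → Bool => (numTrue x - b) ^ 2) + const _ 1 from
        heatBath_const_sq_numTrue_sub_le q b) ⊤
    rw [map_add, heatBath_pow_const, Pi.add_apply, const_apply] at hstep
    rw [hmean, pow_succ, Module.End.mul_apply, Nat.cast_succ]
    exact hstep.trans (add_le_add_left ih 1)

lemma heatBath_const_pow_numTrue_lt_le (hq : q ∈ Set.Icc (0 : ℝ) 1) {t : ℕ} (hd : 0 < d)
    (hθ : θ + d ≤ q * Fintype.card ι +
      (1 - q) * Fintype.card ι * (1 - (Fintype.card ι : ℝ)⁻¹) ^ t) :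
    (heatBath (fun _ _ => q) ^ t) ({x : ι → Bool | numTrue x < θ}.indicator 1) ⊤ ≤ t / d ^ 2 := by
  set a := q * Fintype.card ι + (1 - q) * Fintype.card ι * (1 - (Fintype.card ι : ℝ)⁻¹) ^ t
  have hchebyshev : {x : ι → Bool | numTrue x < θ}.indicator 1 ≤
      (d ^ 2)⁻¹ • fun x => (numTrue x - a) ^ 2 := by
    refine Set.indicator_le' (fun x hx => ?_) fun x _ => by
      simp only [Pi.smul_apply, smul_eq_mul]; positivity
    have hx : numTrue x < θ := hx
    rw [Pi.smul_apply, smul_eq_mul, Pi.one_apply, ← div_eq_inv_mul, one_le_div (by positivity)]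
    nlinarith
  have h := heatBath_pow_mono (fun _ _ => hq) t hchebyshev ⊤
  rw [map_smul, Pi.smul_apply, smul_eq_mul, ← div_eq_inv_mul] at h
  exact h.trans (div_le_div_of_nonneg_right (heatBath_const_pow_sq_numTrue_sub_le hq t)
    (by positivity))

end Fluctuation

/-! ### Concentration -/

section Concentration

lemma mul_exp_add_mul_exp_le {p : ℝ} (hp : p ∈ Set.Icc (0 : ℝ) 1) (a b : ℝ) :
    p * Real.exp a + (1 - p) * Real.exp b ≤
      Real.exp (p * a + (1 - p) * b + (a - b) ^ 2 / 2) := by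
  have hq : 0 ≤ 1 - p := sub_nonneg.2 hp.2
  -- Symmetrization: multiply by the expectation of `exp (-·)`, which Jensen bounds from below.
  have hjensen : Real.exp (-(p * a + (1 - p) * b)) ≤
      p * Real.exp (-a) + (1 - p) * Real.exp (-b) := by
    have := convexOn_exp.2 (Set.mem_univ (-a)) (Set.mem_univ (-b)) hp.1 hq (by ring)
    simp only [smul_eq_mul] at this
    exact (congrArg Real.exp (by ring)).trans_le this
  have hsymm : (p * Real.exp a + (1 - p) * Real.exp b) *
      (p * Real.exp (-a) + (1 - p) * Real.exp (-b)) ≤ Real.exp ((a - b) ^ 2 / 2) := by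
    have hexpand : (p * Real.exp a + (1 - p) * Real.exp b) *
        (p * Real.exp (-a) + (1 - p) * Real.exp (-b)) =
        1 + 2 * (p * (1 - p)) * (Real.cosh (a - b) - 1) := by
      have hcancel (z : ℝ) : Real.exp z * Real.exp (-z) = 1 := by
        rw [← Real.exp_add, add_neg_cancel, Real.exp_zero]
      have hcosh : 2 * Real.cosh (a - b) =
          Real.exp a * Real.exp (-b) + Real.exp b * Real.exp (-a) := by
        rw [← Real.exp_add, ← Real.exp_add, Real.cosh_eq, neg_sub, ← sub_eq_add_neg,
          ← sub_eq_add_neg]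
        ring
      linear_combination p ^ 2 * hcancel a + (1 - p) ^ 2 * hcancel b - p * (1 - p) * hcosh
    have hone : 1 ≤ Real.cosh (a - b) := Real.one_le_cosh _
    rw [hexpand]
    nlinarith [Real.cosh_le_exp_half_sq (a - b), sq_nonneg (p - 1 / 2)]
  have hpos : 0 ≤ p * Real.exp a + (1 - p) * Real.exp b :=
    add_nonneg (mul_nonneg hp.1 (Real.exp_pos _).le) (mul_nonneg hq (Real.exp_pos _).le)
  have hprod := (mul_le_mul_of_nonneg_left hjensen hpos).trans hsymm
  rw [Real.exp_neg, mul_inv_le_iff₀ (Real.exp_pos _)] at hprod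
  rwa [add_comm (p * a + _), Real.exp_add]

variable {ι : Type*} [DecidableEq ι] {p t v : ℝ} {f : (ι → Bool) → ℝ} {c : ι → ℝ}

lemma abs_resample_const_update_sub_le (hp : p ∈ Set.Icc (0 : ℝ) 1)
    (hf : ∀ x e, |f (update x e true) - f (update x e false)| ≤ c e) (e : ι) (x : ι → Bool)
    (i : ι) : |resample (fun _ _ => p) e f (update x i true) -
      resample (fun _ _ => p) e f (update x i false)| ≤ c i := by
  have hc : 0 ≤ c i := (abs_nonneg _).trans (hf x i)
  rcases eq_or_ne i e with rfl | hie
  · simpa [resample_apply] using hc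
  · simp only [resample_apply, update_comm hie]
    have htrue := abs_le.1 (hf (update x e true) i)
    have hfalse := abs_le.1 (hf (update x e false) i)
    rw [abs_le]
    constructor <;> nlinarith [hp.1, hp.2]

lemma dependsOn_resample_const {S : Finset ι} {e : ι} (hf : DependsOn f (insert e S : Finset ι)) :
    DependsOn (resample (fun _ _ => p) e f) (S : Set ι) := by
  intro x y hxy
  have hupdate (b : Bool) : f (update x e b) = f (update y e b) := hf fun i hi => by
    rcases eq_or_ne i e with rfl | hie
    · simp
    · simpa [hie] using hxy i (by simpa [hie] using hi)
  simp only [resample_apply, hupdate]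

variable [Fintype ι]

-- Averaging out one site at a time, each costs `exp (c e ^ 2 / 2)` by the two-point inequality.
lemma bernoulliProd_dotProduct_exp_le_of_dependsOn (hp : p ∈ Set.Icc (0 : ℝ) 1)
    (hf : ∀ x e, |f (update x e true) - f (update x e false)| ≤ c e) {S : Finset ι}
    (hS : DependsOn f (S : Set ι)) :
    (bernoulliProd p ⬝ᵥ fun x => Real.exp (f x)) ≤
      Real.exp (bernoulliProd p ⬝ᵥ f + (∑ e ∈ S, c e ^ 2) / 2) := by
  have hbern := bernoulliProd_mem_stdSimplex (ι := ι) hp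
  induction S using Finset.induction_on generalizing f with
  | empty =>
    obtain ⟨a, rfl⟩ : ∃ a, f = const _ a := ⟨f ⊥, funext fun _ => hS (by simp)⟩
    rw [dotProduct_const_of_mem_stdSimplex hbern]
    exact dotProduct_le_of_mem_stdSimplex hbern fun _ => by simp
  | insert e S he ih =>
    have hone (x : ι → Bool) : resample (fun _ _ => p) e (fun x => Real.exp (f x)) x ≤
        Real.exp (resample (fun _ _ => p) e f x) * Real.exp (c e ^ 2 / 2) := by
      rw [← Real.exp_add]
      refine (mul_exp_add_mul_exp_le hp _ _).trans (Real.exp_le_exp.2 ?_)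
      rw [resample_apply]
      have hsq := sq_le_sq' (abs_le.1 (hf x e)).1 (abs_le.1 (hf x e)).2
      linarith
    have hih := ih (abs_resample_const_update_sub_le hp hf e) (dependsOn_resample_const hS)
    rw [bernoulliProd_dotProduct_resample] at hih
    calc (bernoulliProd p ⬝ᵥ fun x => Real.exp (f x))
        = bernoulliProd p ⬝ᵥ resample (fun _ _ => p) e (fun x => Real.exp (f x)) :=
          (bernoulliProd_dotProduct_resample p e _).symm
      _ ≤ bernoulliProd p ⬝ᵥ Real.exp (c e ^ 2 / 2) •
            fun x => Real.exp (resample (fun _ _ => p) e f x) :=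
          dotProduct_le_dotProduct_of_nonneg_left
            (fun x => (hone x).trans_eq (mul_comm _ _)) hbern.1
      _ ≤ Real.exp (c e ^ 2 / 2) *
            Real.exp (bernoulliProd p ⬝ᵥ f + (∑ e ∈ S, c e ^ 2) / 2) := by
          rw [dotProduct_smul, smul_eq_mul]
          exact mul_le_mul_of_nonneg_left hih (Real.exp_pos _).le
      _ = Real.exp (bernoulliProd p ⬝ᵥ f + (∑ e ∈ insert e S, c e ^ 2) / 2) := by
          rw [← Real.exp_add, sum_insert he]
          congr 1
          ring

lemma bernoulliProd_dotProduct_exp_le (hp : p ∈ Set.Icc (0 : ℝ) 1)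
    (hf : ∀ x e, |f (update x e true) - f (update x e false)| ≤ c e) :
    (bernoulliProd p ⬝ᵥ fun x => Real.exp (f x)) ≤
      Real.exp (bernoulliProd p ⬝ᵥ f + (∑ e, c e ^ 2) / 2) :=
  bernoulliProd_dotProduct_exp_le_of_dependsOn hp hf (by simpa using dependsOn_univ f)

/-- **McDiarmid's inequality** -/
lemma bernoulliProd_dotProduct_indicator_add_le (hp : p ∈ Set.Icc (0 : ℝ) 1)
    (hf : ∀ x e, |f (update x e true) - f (update x e false)| ≤ c e) (hv : 0 < v)
    (hcv : ∑ e, c e ^ 2 ≤ v) (ht : 0 ≤ t) :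
    bernoulliProd p ⬝ᵥ {x | bernoulliProd p ⬝ᵥ f + t ≤ f x}.indicator 1 ≤
      Real.exp (-(t ^ 2 / (2 * v))) := by
  set m := bernoulliProd p ⬝ᵥ f
  have hscaled (x : ι → Bool) (e : ι) : |(t / v * f (update x e true)) -
      (t / v * f (update x e false))| ≤ t / v * c e := by
    rw [← mul_sub, abs_mul, abs_of_nonneg (by positivity : 0 ≤ t / v)]
    exact mul_le_mul_of_nonneg_left (hf x e) (by positivity)
  have hmarkov : {x | m + t ≤ f x}.indicator 1 ≤
      Real.exp (-(t / v * (m + t))) • fun x => Real.exp (t / v * f x) := by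
    refine Set.indicator_le' (fun x hx => ?_) fun x _ => by
      simp only [Pi.smul_apply, smul_eq_mul]; positivity
    have hx : m + t ≤ f x := hx
    rw [Pi.smul_apply, smul_eq_mul, ← Real.exp_add, Pi.one_apply, Real.one_le_exp_iff,
      neg_add_eq_sub, ← mul_sub]
    exact mul_nonneg (by positivity) (sub_nonneg.2 hx)
  have hexp := bernoulliProd_dotProduct_exp_le (f := fun x => t / v * f x) hp hscaled
  have hmean : (bernoulliProd p ⬝ᵥ fun x => t / v * f x) = t / v * m :=
    dotProduct_smul (t / v) (bernoulliProd p) f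
  refine (dotProduct_le_dotProduct_of_nonneg_left hmarkov
    (bernoulliProd_mem_stdSimplex hp).1).trans ?_
  rw [dotProduct_smul, smul_eq_mul]
  refine (mul_le_mul_of_nonneg_left hexp (Real.exp_pos _).le).trans ?_
  rw [← Real.exp_add, hmean, Real.exp_le_exp]
  simp only [mul_pow, ← mul_sum]
  have hvar : (t / v) ^ 2 * ∑ e, c e ^ 2 ≤ (t / v) ^ 2 * v :=
    mul_le_mul_of_nonneg_left hcv (sq_nonneg _)
  have hopt : (t / v) ^ 2 * v = t / v * t := by field_simp
  have hgoal : t ^ 2 / (2 * v) = t / v * t / 2 := by field_simp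
  rw [hgoal]
  linarith

lemma bernoulliProd_dotProduct_le_numTrue_le [Nonempty ι] (hp : p ∈ Set.Icc (0 : ℝ) 1) {d : ℝ}
    (hd : 0 ≤ d) : bernoulliProd p ⬝ᵥ
      {x : ι → Bool | p * Fintype.card ι + d ≤ numTrue x}.indicator 1 ≤
      Real.exp (-(d ^ 2 / (2 * Fintype.card ι))) := by
  rw [← bernoulliProd_dotProduct_numTrue]
  exact bernoulliProd_dotProduct_indicator_add_le (c := fun _ => 1) hp
    (fun x e => by simp [numTrue_update]) (Nat.cast_pos.2 Fintype.card_pos) (by simp) hd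

end Concentration

namespace IsStaircase

variable {ι : Type*} [Fintype ι] [DecidableEq ι] [Nonempty ι] {σ : (ι → Bool) → ι → ℝ}
  {u : ℕ → ℝ} {B : ℕ → Set (ι → Bool)} {τ ρ θ d : ℝ} {T k t : ℕ}

lemma heatBath_pow_numTrue_lt_le (h : IsStaircase σ (-1) u B τ) (hσ : IsAttractive σ)
    (hT : 1 ≤ T) (hρ : Fintype.card ι * (1 - (Fintype.card ι : ℝ)⁻¹) ^ T ≤ ρ) (hd : 0 < d)
    (hθ : θ + d ≤ u (k + 1) * Fintype.card ι +
      (1 - u (k + 1)) * Fintype.card ι * (1 - (Fintype.card ι : ℝ)⁻¹) ^ t) :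
    (heatBath σ ^ t) ({x | numTrue x < θ}.indicator 1) ⊤ ≤
      t / d ^ 2 + t * ((2 * T) ^ k * (τ + ρ)) := by
  have hanti : Monotone
      ((-1 : ℝ) • {x : ι → Bool | numTrue x < θ}.indicator (1 : (ι → Bool) → ℝ)) := by
    intro x y hxy
    have hlower : numTrue y < θ → numTrue x < θ := (numTrue_mono hxy).trans_lt
    simp only [Pi.smul_apply, smul_eq_mul, Set.indicator_apply, Set.mem_ofPred_eq, Pi.one_apply]
    split_ifs <;> first | tauto | norm_num
  have hvisit (r : ℕ) :
      (heatBath σ ^ r) ((B k).indicator 1) ⊤ ≤ (2 * T) ^ k * (τ + ρ) := by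
    -- The bad event is a lower set, so it is least likely when starting from `⊤`.
    have htop (x : ι → Bool) :
        (heatBath σ ^ r) ((B k).indicator 1) ⊤ ≤ (heatBath σ ^ r) ((B k).indicator 1) x := by
      have := monotone_heatBath_pow hσ (h.monotone_indicator k) r (le_top : x ≤ ⊤)
      simp only [map_smul, Pi.smul_apply, smul_eq_mul] at this
      linarith
    refine (const_le_heatBath_pow hσ.mem_Icc htop (k * T) ⊤).trans ?_
    rw [← Module.End.mul_apply, ← pow_add]
    exact h.heatBath_pow_indicator_le hσ.mem_Icc hT hρ (Nat.le_add_right _ _) ⊤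
  have hcompare := heatBath_pow_le_heatBath_const_pow_add_sum h.sign hσ.mem_Icc
    (h.mem_Icc (k + 1)) (h.rate_le k) (indicator_one_mem_Icc _) hanti t ⊤
  rw [Pi.add_apply, Finset.sum_apply] at hcompare
  have hsum := sum_le_card_nsmul (range t) _ _ fun r _ => hvisit r
  rw [card_range, nsmul_eq_mul] at hsum
  linarith [heatBath_const_pow_numTrue_lt_le (h.mem_Icc (k + 1)) hd hθ]

lemma dotProduct_le_numTrue_le (h : IsStaircase σ 1 u B τ)
    (hσ : ∀ x e, σ x e ∈ Set.Icc (0 : ℝ) 1) (hT : 1 ≤ T)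
    (hρ : Fintype.card ι * (1 - (Fintype.card ι : ℝ)⁻¹) ^ T ≤ ρ) {π : (ι → Bool) → ℝ}
    (hπ : π ∈ stdSimplex ℝ (ι → Bool)) (hstat : ∀ r f, π ⬝ᵥ (heatBath σ ^ r) f = π ⬝ᵥ f)
    (hd : 0 ≤ d) (hθ : u k * Fintype.card ι + d ≤ θ) :
    π ⬝ᵥ {x | θ ≤ numTrue x}.indicator 1 ≤
      Real.exp (-(d ^ 2 / (2 * Fintype.card ι))) + (2 * T) ^ k * (τ + ρ) := by
  have hup : Monotone
      ((1 : ℝ) • {x : ι → Bool | θ ≤ numTrue x}.indicator (1 : (ι → Bool) → ℝ)) := by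
    intro x y hxy
    have hupper : θ ≤ numTrue x → θ ≤ numTrue y := fun hx => hx.trans (numTrue_mono hxy)
    simp only [Pi.smul_apply, smul_eq_mul, Set.indicator_apply, Set.mem_ofPred_eq, Pi.one_apply]
    split_ifs <;> first | tauto | norm_num
  have hsub : ({x : ι → Bool | θ ≤ numTrue x}.indicator 1 : (ι → Bool) → ℝ) ≤
      {x | u k * Fintype.card ι + d ≤ numTrue x}.indicator 1 :=
    Set.indicator_le_indicator_of_subset (fun _ hx => hθ.trans hx) fun _ => zero_le_one
  have htail := (dotProduct_le_dotProduct_of_nonneg_left hsub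
    (bernoulliProd_mem_stdSimplex (h.mem_Icc k)).1).trans
      (bernoulliProd_dotProduct_le_numTrue_le (h.mem_Icc k) hd)
  rw [← hstat (k * T)]
  refine dotProduct_le_of_mem_stdSimplex hπ fun x => ?_
  have hdom := h.dominatedByBernoulli hσ hT hρ k _ (indicator_one_mem_Icc _) hup x
  linarith [h.nonneg, (card_mul_one_sub_inv_card_pow_nonneg T).trans hρ]

end IsStaircase

end HeatBath

namespace ERGM

open Function Matrix HeatBath Filter
open scoped Topology

/-! ### Total variation distance and rooted copy counts -/

section TotalVariation

variable {n : ℕ} {μ ν : Config n → ℝ} {f : Config n → ℝ} {D : ℝ}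

lemma dotProduct_sub_le_tvDist (hμ : μ ∈ stdSimplex ℝ (Config n))
    (hν : ν ∈ stdSimplex ℝ (Config n)) (hf : ∀ x, f x ∈ Set.Icc (0 : ℝ) 1) :
    μ ⬝ᵥ f - ν ⬝ᵥ f ≤ tvDist μ ν := by
  have hcentre : μ ⬝ᵥ f - ν ⬝ᵥ f = ∑ x, (μ x - ν x) * (f x - 1 / 2) := by
    simp only [dotProduct, sub_mul, mul_sub, sum_sub_distrib, ← sum_mul, hμ.2, hν.2]
    ring
  rw [hcentre, tvDist, sum_div]
  gcongr with x
  have habs : |f x - 1 / 2| ≤ 1 / 2 := abs_le.2 ⟨by linarith [(hf x).1], by linarith [(hf x).2]⟩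
  calc (μ x - ν x) * (f x - 1 / 2) ≤ |μ x - ν x| * |f x - 1 / 2| := by
        rw [← abs_mul]; exact le_abs_self _
    _ ≤ |μ x - ν x| * (1 / 2) := by gcongr
    _ = |μ x - ν x| / 2 := by ring

lemma tvDist_le (hμ : μ ∈ stdSimplex ℝ (Config n)) (hν : ν ∈ stdSimplex ℝ (Config n))
    (h : ∀ f : Config n → ℝ, (∀ x, f x ∈ Set.Icc (0 : ℝ) 1) → μ ⬝ᵥ f - ν ⬝ᵥ f ≤ D) :
    tvDist μ ν ≤ D := by
  refine le_of_eq_of_le ?_ (h ({x | ν x ≤ μ x}.indicator 1) (indicator_one_mem_Icc _))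
  have hhalf (x : Config n) : |μ x - ν x| / 2 =
      (μ x - ν x) * {x | ν x ≤ μ x}.indicator 1 x - (μ x - ν x) / 2 := by
    by_cases hx : ν x ≤ μ x
    · simp only [Set.mem_ofPred_eq, hx, Set.indicator_of_mem, Pi.one_apply,
        abs_of_nonneg (sub_nonneg.2 hx)]
      ring
    · simp only [Set.mem_ofPred_eq, hx, not_false_eq_true, Set.indicator_of_notMem,
        abs_of_neg (sub_neg.2 (not_le.1 hx))]
      ring
  rw [tvDist, sum_div, sum_congr rfl fun x _ => hhalf x, sum_sub_distrib, ← sum_div,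
    sum_sub_distrib, hμ.2, hν.2]
  simp only [dotProduct, sub_mul, sum_sub_distrib]
  ring

end TotalVariation

section Embeddings

variable {m n : ℕ} {a c : EdgeK m} {e f : EdgeK n}

lemma card_edgeK : Fintype.card (EdgeK n) = n.choose 2 := by
  rw [Sym2.card_subtype_not_diag, Fintype.card_fin]

lemma two_le_of_edgeK (e : EdgeK n) : 2 ≤ n := by
  have hpos : 0 < n.choose 2 := card_edgeK (n := n) ▸ Fintype.card_pos_iff.2 ⟨e⟩
  by_contra! hn
  exact hpos.ne' (Nat.choose_eq_zero_of_lt hn)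

lemma mapEdge_injective (v : Fin m ↪ Fin n) : Injective (mapEdge v) := fun _ _ h =>
  Subtype.ext (Sym2.map.injective v.injective (congrArg Subtype.val h))

lemma exists_perm_map_eq (e f : EdgeK n) : ∃ π : Equiv.Perm (Fin n), e.1.map π = f.1 := by
  obtain ⟨⟨i, j⟩, hij⟩ := e
  obtain ⟨⟨k, l⟩, hkl⟩ := f
  change i ≠ j at hij
  change k ≠ l at hkl
  refine ⟨(Equiv.swap i k).trans (Equiv.swap (Equiv.swap i k j) l), ?_⟩
  have hne : k ≠ Equiv.swap i k j := fun h =>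
    hij ((Equiv.swap i k).injective ((Equiv.swap_apply_left i k).trans h))
  change s(_, _) = s(k, l)
  simp only [Equiv.trans_apply, Equiv.swap_apply_left, Equiv.swap_apply_of_ne_of_ne hne hkl]

lemma card_filter_mapEdge_eq_congr (a : EdgeK m) (e f : EdgeK n) :
    #{v : Fin m ↪ Fin n | mapEdge v a = e} = #{v : Fin m ↪ Fin n | mapEdge v a = f} := by
  obtain ⟨π, hπ⟩ := exists_perm_map_eq e f
  refine card_equiv (Equiv.embeddingCongr (Equiv.refl _) π) fun v => ?_
  have hcomp : (mapEdge (Equiv.embeddingCongr (Equiv.refl (Fin m)) π v) a).1 =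
      (mapEdge v a).1.map π := by
    simp only [mapEdge, Sym2.map_map]
    rfl
  simp only [mem_filter, mem_univ, true_and, Subtype.ext_iff, hcomp, ← hπ]
  exact (Sym2.map.injective π.injective).eq_iff.symm

lemma card_filter_mapEdge_eq (a : EdgeK m) (e : EdgeK n) :
    #{v : Fin m ↪ Fin n | mapEdge v a = e} = 2 * (n - 2).descFactorial (m - 2) := by
  obtain ⟨k, rfl⟩ := Nat.exists_eq_add_of_le' (two_le_of_edgeK a)
  obtain ⟨l, rfl⟩ := Nat.exists_eq_add_of_le' (two_le_of_edgeK e)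
  have hcount : (l + 2).choose 2 * #{v : Fin (k + 2) ↪ Fin (l + 2) | mapEdge v a = e} =
      (l + 2).descFactorial (k + 2) := by
    have hfibre := card_eq_sum_card_fiberwise (s := (univ : Finset (Fin (k + 2) ↪ Fin (l + 2))))
      (f := fun v => mapEdge v a) (t := univ) fun _ _ => mem_coe.2 (mem_univ _)
    rw [card_univ, Fintype.card_embedding_eq, Fintype.card_fin, Fintype.card_fin,
      sum_congr rfl fun f _ => card_filter_mapEdge_eq_congr a f e, sum_const, card_univ,
      card_edgeK, smul_eq_mul] at hfibre
    exact hfibre.symm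
  have hchoose : (l + 2).choose 2 * 2 = (l + 2) * (l + 1) := by
    have := Nat.descFactorial_eq_factorial_mul_choose (l + 2) 2
    simp only [Nat.succ_descFactorial_succ, Nat.descFactorial_zero, Nat.factorial_two] at this
    lia
  have hpos : 0 < (l + 2).choose 2 := Nat.choose_pos (Nat.le_add_left 2 l)
  refine Nat.eq_of_mul_eq_mul_left hpos ?_
  rw [hcount, ← mul_assoc, hchoose, Nat.succ_descFactorial_succ, Nat.succ_descFactorial_succ,
    Nat.add_sub_cancel, Nat.add_sub_cancel, mul_assoc]

lemma card_filter_mapEdge_le (a : EdgeK m) (e : EdgeK n) :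
    (#{v : Fin m ↪ Fin n | mapEdge v a = e} : ℝ) ≤ 2 * (n : ℝ) ^ (m - 2) := by
  rw [card_filter_mapEdge_eq]
  have hle : (n - 2).descFactorial (m - 2) ≤ n ^ (m - 2) :=
    (Nat.descFactorial_le_pow _ _).trans (Nat.pow_le_pow_left (Nat.sub_le _ _) _)
  exact_mod_cast Nat.mul_le_mul_left 2 hle

lemma le_card_filter_mapEdge (a : EdgeK m) (e : EdgeK n) (hmn : m ≤ n) :
    2 * (n : ℝ) ^ (m - 2) * (1 - (m : ℝ) ^ 2 / n) ≤ #{v : Fin m ↪ Fin n | mapEdge v a = e} := by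
  have hm := two_le_of_edgeK a
  have hn : (0 : ℝ) < n := Nat.cast_pos.2 (by lia)
  have hratio : (m : ℝ) / n ≤ 1 := (div_le_one hn).2 (Nat.cast_le.2 hmn)
  have hdesc : ((n - m : ℕ) : ℝ) ^ (m - 2) ≤ (n - 2).descFactorial (m - 2) := by
    exact mod_cast (Nat.pow_le_pow_left (by lia) _).trans
      (Nat.pow_sub_le_descFactorial (n - 2) (m - 2))
  have hbernoulli : 1 - (m : ℝ) ^ 2 / n ≤ (1 - m / n) ^ (m - 2) := by
    have hpow := one_add_mul_le_pow (a := -((m : ℝ) / n)) (by linarith) (m - 2)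
    have hm2 : ((m - 2 : ℕ) : ℝ) * (m / n) ≤ m * (m / n) := by
      gcongr
      exact Nat.sub_le _ _
    rw [← sub_eq_add_neg] at hpow
    have hsq : (m : ℝ) ^ 2 / n = m * (m / n) := by ring
    linarith
  rw [card_filter_mapEdge_eq]
  push_cast
  calc 2 * (n : ℝ) ^ (m - 2) * (1 - (m : ℝ) ^ 2 / n)
      ≤ 2 * (n : ℝ) ^ (m - 2) * (1 - m / n) ^ (m - 2) := by gcongr
    _ = 2 * ((n - m : ℕ) : ℝ) ^ (m - 2) := by
        rw [mul_assoc, ← mul_pow, mul_sub, mul_div_cancel₀ _ hn.ne', mul_one, Nat.cast_sub hmn]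
    _ ≤ 2 * (n - 2).descFactorial (m - 2) := by gcongr

lemma card_filter_forall_mem_le (s : Fin m → Finset (Fin n)) :
    #{v : Fin m ↪ Fin n | ∀ l, v l ∈ s l} ≤ ∏ l, #(s l) := by
  rw [← Fintype.card_piFinset]
  exact card_le_card_of_injOn (⇑) (fun v hv => Fintype.mem_piFinset.2 (mem_filter.1 hv).2)
    DFunLike.coe_injective.injOn

lemma exists_mem_notMem_of_ne (hac : a ≠ c) : ∃ k ∈ c.1, k ∉ a.1 := by
  by_contra! hsub
  obtain ⟨⟨i, j⟩, hij⟩ := c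
  exact hac (Subtype.ext ((Sym2.mem_and_mem_iff hij).1
    ⟨hsub i (Sym2.mem_mk_left i j), hsub j (Sym2.mem_mk_right i j)⟩))

lemma card_filter_mapEdge_mapEdge_le (hac : a ≠ c) (e f : EdgeK n) :
    (#{v : Fin m ↪ Fin n | mapEdge v a = e ∧ mapEdge v c = f} : ℝ) ≤
      8 * ((n : ℝ) ^ (m - 2) / n) := by
  obtain ⟨k, hkc, hka⟩ := exists_mem_notMem_of_ne hac
  have hthree : #(insert k a.1.toFinset) = 3 := by
    rw [card_insert_of_notMem (by rwa [Sym2.mem_toFinset]), Sym2.card_toFinset_of_not_isDiag _ a.2]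
  have hm : 3 ≤ m := by simpa [hthree] using card_le_univ (insert k a.1.toFinset)
  let target (l : Fin m) : Finset (Fin n) :=
    if l ∈ a.1 then e.1.toFinset else if l = k then f.1.toFinset else univ
  have htarget (l : Fin m) : #(target l) = if l ∈ insert k a.1.toFinset then 2 else n := by
    by_cases hl : l ∈ a.1 <;> by_cases hk : l = k <;>
      simp [target, hl, hk, hka, Sym2.card_toFinset_of_not_isDiag, e.2, f.2]
  have hmem : #{v : Fin m ↪ Fin n | mapEdge v a = e ∧ mapEdge v c = f} ≤ 8 * n ^ (m - 3) := by
    calc _ ≤ #{v : Fin m ↪ Fin n | ∀ l, v l ∈ target l} := by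
          refine card_le_card (monotone_filter_right _ fun v _ => ?_)
          rintro ⟨rfl, rfl⟩ l
          by_cases hl : l ∈ a.1
          · simp [target, hl, mapEdge]
          by_cases hk : l = k
          · simp [target, hk, hka, hkc, mapEdge]
          · simp [target, hl, hk]
      _ ≤ ∏ l, #(target l) := card_filter_forall_mem_le target
      _ = 8 * n ^ (m - 3) := by
          simp only [htarget, prod_ite, prod_const, filter_mem_eq_inter, univ_inter, hthree,
            ← sdiff_eq_filter, card_sdiff_of_subset (subset_univ _), card_univ, Fintype.card_fin]
          norm_num
  have hn : (n : ℝ) ≠ 0 := Nat.cast_ne_zero.2 (by have := two_le_of_edgeK e; lia)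
  rw [show m - 2 = m - 3 + 1 by lia, pow_succ, mul_div_cancel_right₀ _ hn]
  exact_mod_cast hmem

lemma sum_card_filter_mapEdge_mapEdge (a c : EdgeK m) (e : EdgeK n) :
    ∑ f, #{v : Fin m ↪ Fin n | mapEdge v a = e ∧ mapEdge v c = f} =
      #{v : Fin m ↪ Fin n | mapEdge v a = e} := by
  rw [card_eq_sum_card_fiberwise (f := fun v => mapEdge v c) (t := univ)
    fun _ _ => mem_coe.2 (mem_univ _)]
  simp only [filter_filter]

end Embeddings

section RootedCopies

variable {m n : ℕ} {a : EdgeK m} {C : Finset (EdgeK m)} {e : EdgeK n} {p s δ K : ℝ}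

/-- The number of vertex embeddings which send the root edge `a` of a pattern to `e` and the other
edges `C` of the pattern into the graph `x`. -/
def rootedCopies (a : EdgeK m) (C : Finset (EdgeK m)) (e : EdgeK n) (x : Config n) : ℕ :=
  #{v : Fin m ↪ Fin n | mapEdge v a = e ∧ ∀ c ∈ C, x (mapEdge v c) = true}

lemma rootedCopies_mono (a : EdgeK m) (C : Finset (EdgeK m)) (e : EdgeK n) :
    Monotone (rootedCopies a C e) := fun _ _ hxy =>
  card_le_card (monotone_filter_right _ fun _ _ hv =>
    ⟨hv.1, fun c hc => hxy (mapEdge _ c) (hv.2 c hc)⟩)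

lemma abs_rootedCopies_update_sub_le (a : EdgeK m) (C : Finset (EdgeK m)) (e f : EdgeK n)
    (x : Config n) :
    |(rootedCopies a C e (update x f true) : ℝ) - rootedCopies a C e (update x f false)| ≤
      ∑ c ∈ C, (#{v : Fin m ↪ Fin n | mapEdge v a = e ∧ mapEdge v c = f} : ℝ) := by
  have hmono := rootedCopies_mono a C e (update_false_le_update_true x f)
  have hsub : rootedCopies a C e (update x f true) ≤ rootedCopies a C e (update x f false) +
      ∑ c ∈ C, #{v : Fin m ↪ Fin n | mapEdge v a = e ∧ mapEdge v c = f} := by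
    refine (card_le_card fun v hv => ?_).trans
      ((card_union_le _ _).trans (Nat.add_le_add_left card_biUnion_le _))
    simp only [mem_union, mem_biUnion, mem_filter, mem_univ, true_and] at hv ⊢
    by_cases hf : ∃ c ∈ C, mapEdge v c = f
    · obtain ⟨c, hc, hcf⟩ := hf
      exact Or.inr ⟨c, hc, hv.1, hcf⟩
    · push Not at hf
      refine Or.inl ⟨hv.1, fun c hc => ?_⟩
      rw [update_of_ne (hf c hc), ← update_of_ne (hf c hc) true x]
      exact hv.2 c hc
  rw [abs_of_nonneg (sub_nonneg.2 (Nat.cast_le.2 hmono)), sub_le_iff_le_add']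
  exact_mod_cast hsub

lemma bernoulliProd_dotProduct_rootedCopies (p : ℝ) (a : EdgeK m) (C : Finset (EdgeK m))
    (e : EdgeK n) : (bernoulliProd p ⬝ᵥ fun x => (rootedCopies a C e x : ℝ)) =
      p ^ #C * #{v : Fin m ↪ Fin n | mapEdge v a = e} := by
  have hsum : (fun x => (rootedCopies a C e x : ℝ)) =
      ∑ v : Fin m ↪ Fin n with mapEdge v a = e,
        fun x => if ∀ f ∈ C.image (mapEdge v), x f = true then 1 else 0 := by
    ext x
    simp only [rootedCopies, ← filter_filter, Finset.sum_apply, sum_boole, forall_mem_image]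
  rw [hsum, dotProduct_sum]
  simp only [bernoulliProd_dotProduct_forall_mem, card_image_of_injective _ (mapEdge_injective _),
    sum_const, nsmul_eq_mul, mul_comm]

lemma sum_sq_sum_card_filter_mapEdge_le (ha : a ∉ C) (e : EdgeK n) :
    ∑ f, (∑ c ∈ C, (#{v : Fin m ↪ Fin n | mapEdge v a = e ∧ mapEdge v c = f} : ℝ)) ^ 2 ≤
      16 * (#C : ℝ) ^ 2 * (((n : ℝ) ^ (m - 2)) ^ 2 / n) := by
  set M := (n : ℝ) ^ (m - 2)
  set w : EdgeK n → ℝ := fun f =>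
    ∑ c ∈ C, (#{v : Fin m ↪ Fin n | mapEdge v a = e ∧ mapEdge v c = f} : ℝ) with hw
  have hpoint (f : EdgeK n) : w f ≤ #C * (8 * (M / n)) := by
    rw [← nsmul_eq_mul]
    exact sum_le_card_nsmul _ _ _ fun c hc =>
      card_filter_mapEdge_mapEdge_le (ne_of_mem_of_not_mem hc ha).symm e f
  have htotal : ∑ f, w f = #C * #{v : Fin m ↪ Fin n | mapEdge v a = e} := by
    rw [hw, sum_comm, ← nsmul_eq_mul, ← sum_const]
    exact sum_congr rfl fun c _ => mod_cast sum_card_filter_mapEdge_mapEdge a c e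
  calc ∑ f, w f ^ 2 ≤ ∑ f, #C * (8 * (M / n)) * w f := by
        gcongr with f
        rw [sq]
        exact mul_le_mul_of_nonneg_right (hpoint f) (sum_nonneg fun _ _ => Nat.cast_nonneg _)
    _ = #C * (8 * (M / n)) * (#C * #{v : Fin m ↪ Fin n | mapEdge v a = e}) := by
        rw [← mul_sum, htotal]
    _ ≤ #C * (8 * (M / n)) * (#C * (2 * M)) := by
        gcongr
        exact card_filter_mapEdge_le a e
    _ = 16 * (#C : ℝ) ^ 2 * (M ^ 2 / n) := by ring

lemma sign_mul_rootedCopies_mean_le (hs : s = 1 ∨ s = -1) (hp : p ∈ Set.Icc (0 : ℝ) 1)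
    (hmn : m ≤ n) (hδ : 4 * (m : ℝ) ^ 2 ≤ δ * n) (a : EdgeK m) (C : Finset (EdgeK m))
    (e : EdgeK n) :
    s * (p ^ #C * #{v : Fin m ↪ Fin n | mapEdge v a = e} - 2 * p ^ #C * (n : ℝ) ^ (m - 2)) ≤
      δ / 2 * (n : ℝ) ^ (m - 2) := by
  have hn : (0 : ℝ) < n := Nat.cast_pos.2 (by have := two_le_of_edgeK e; lia)
  have hupper := card_filter_mapEdge_le a e
  have hlower := le_card_filter_mapEdge a e hmn
  set M := (n : ℝ) ^ (m - 2)
  have hM : 0 < M := by positivity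
  have hpC : 0 ≤ p ^ #C := pow_nonneg hp.1 _
  have hδM : (m : ℝ) ^ 2 / n * M ≤ δ / 4 * M :=
    mul_le_mul_of_nonneg_right ((div_le_iff₀ hn).2 (by linarith)) hM.le
  have hδ₀ : 0 ≤ δ / 4 * M := le_trans (by positivity) hδM
  rcases hs with rfl | rfl
  · nlinarith [hδ₀]
  · have hdef : p ^ #C * (2 * M - #{v : Fin m ↪ Fin n | mapEdge v a = e}) ≤
        1 * (δ / 2 * M) :=
      mul_le_mul (pow_le_one₀ hp.1 hp.2) (by linarith) (by linarith) zero_le_one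
    linarith

lemma bernoulliProd_dotProduct_rootedCopies_deviation_le (hs : s = 1 ∨ s = -1)
    (hp : p ∈ Set.Icc (0 : ℝ) 1) (ha : a ∉ C) (hK : 16 * (#C : ℝ) ^ 2 ≤ K) (hK₀ : 0 < K)
    (hmn : m ≤ n) (hδ : 4 * (m : ℝ) ^ 2 ≤ δ * n) (e : EdgeK n) :
    bernoulliProd p ⬝ᵥ {x | δ * (n : ℝ) ^ (m - 2) <
        s * (rootedCopies a C e x - 2 * p ^ #C * (n : ℝ) ^ (m - 2))}.indicator 1 ≤
      Real.exp (-(δ ^ 2 * n / (8 * K))) := by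
  have hn : (0 : ℝ) < n := Nat.cast_pos.2 (by have := two_le_of_edgeK e; lia)
  have hmean := sign_mul_rootedCopies_mean_le hs hp hmn hδ a C e
  have hvar := (sum_sq_sum_card_filter_mapEdge_le ha e).trans
    (mul_le_mul_of_nonneg_right hK (by positivity))
  set M := (n : ℝ) ^ (m - 2)
  have hM : 0 < M := by positivity
  have hδ₀ : 0 ≤ δ := by nlinarith [sq_nonneg (m : ℝ)]
  have hdiff (x : Config n) (f : EdgeK n) :
      |s * rootedCopies a C e (update x f true) - s * rootedCopies a C e (update x f false)| ≤
        ∑ c ∈ C, (#{v : Fin m ↪ Fin n | mapEdge v a = e ∧ mapEdge v c = f} : ℝ) := by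
    have hs₁ : |s| = 1 := by rcases hs with rfl | rfl <;> norm_num
    rw [← mul_sub, abs_mul, hs₁, one_mul]
    exact abs_rootedCopies_update_sub_le a C e f x
  have htail := bernoulliProd_dotProduct_indicator_add_le
    (f := fun x => s * (rootedCopies a C e x : ℝ)) hp hdiff (by positivity : 0 < K * (M ^ 2 / n))
    hvar (by positivity : 0 ≤ δ / 2 * M)
  have hcentre : (bernoulliProd p ⬝ᵥ fun x => s * (rootedCopies a C e x : ℝ)) =
      s * (p ^ #C * #{v : Fin m ↪ Fin n | mapEdge v a = e}) := by
    rw [← bernoulliProd_dotProduct_rootedCopies, ← smul_eq_mul, ← dotProduct_smul]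
    rfl
  have hexponent : (δ / 2 * M) ^ 2 / (2 * (K * (M ^ 2 / n))) = δ ^ 2 * n / (8 * K) := by
    field_simp
    norm_num
  rw [hcentre, hexponent] at htail
  refine (dotProduct_le_dotProduct_of_nonneg_left ?_ (bernoulliProd_mem_stdSimplex hp).1).trans
    htail
  refine Set.indicator_le_indicator_of_subset (fun x hx => ?_) fun _ => zero_le_one
  simp only [Set.mem_ofPred_eq] at hx ⊢
  linarith

end RootedCopies

/-! ### The update probabilities -/

lemma exp_div_one_add_exp (z : ℝ) : Real.exp z / (1 + Real.exp z) = Real.sigmoid z := by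
  rw [Real.sigmoid_def, Real.exp_neg]
  field_simp
  ring

lemma one_div_one_add_exp (z : ℝ) : 1 / (1 + Real.exp z) = 1 - Real.sigmoid z := by
  rw [← Real.sigmoid_neg, Real.sigmoid_def, neg_neg, one_div]

lemma setEdge_eq_update {n : ℕ} (x : Config n) (e : EdgeK n) (b : Bool) :
    setEdge x e b = update x e b := by
  ext f
  simp only [setEdge, update_apply]

section Kernel

variable {n : ℕ} {K : Config n → Config n → ℝ} {A : Module.End ℝ (Config n → ℝ)}

lemma kernelStep_dotProduct (h : ∀ x f, K x ⬝ᵥ f = A f x) (t : ℕ) (x : Config n)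
    (f : Config n → ℝ) : kernelStep K t x ⬝ᵥ f = (A ^ t) f x := by
  induction t generalizing f with
  | zero => simp [kernelStep, dotProduct]
  | succ t ih =>
    rw [pow_succ, Module.End.mul_apply, ← ih, ← funext fun z => h z f]
    simp only [kernelStep, dotProduct, sum_mul, mul_sum, mul_assoc]
    exact sum_comm

lemma kernelStep_mem_stdSimplex [Nonempty (EdgeK n)] {σ : Config n → EdgeK n → ℝ}
    (h : ∀ x f, K x ⬝ᵥ f = heatBath σ f x) (hσ : ∀ x e, σ x e ∈ Set.Icc (0 : ℝ) 1) (t : ℕ)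
    (x : Config n) : kernelStep K t x ∈ stdSimplex ℝ (Config n) := by
  refine ⟨fun y => ?_, ?_⟩
  · rw [← dotProduct_single_one (kernelStep K t x) y, kernelStep_dotProduct h]
    exact const_le_heatBath_pow hσ (fun z => Pi.single_nonneg.2 zero_le_one z) t x
  · rw [← dotProduct_one, kernelStep_dotProduct h]
    exact congrFun (heatBath_pow_const σ 1 t) x

end Kernel

section Model

variable {s : ℕ} {V : Fin s → ℕ} {Pt : ∀ i, Finset (EdgeK (V i))} {β : Fin s → ℝ} {n : ℕ}

/-- Every pattern other than a single edge has a nonnegative coefficient, so that the model is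
ferromagnetic. -/
def IsFerromagnetic (Pt : ∀ i, Finset (EdgeK (V i))) (β : Fin s → ℝ) : Prop :=
  ∀ i, 0 ≤ β i ∨ (V i = 2 ∧ #(Pt i) = 1)

/-- The probability that the Glauber dynamics makes `e` present when `e` is chosen. -/
def updateProb (Pt : ∀ i, Finset (EdgeK (V i))) (β : Fin s → ℝ) (n : ℕ) (x : Config n)
    (e : EdgeK n) : ℝ :=
  Real.sigmoid (dH V Pt β n x e)

lemma copyCount_update_true {m : ℕ} (G : Finset (EdgeK m)) (x : Config n) (e : EdgeK n) :
    copyCount (update x e true) G =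
      copyCount (update x e false) G + ∑ a ∈ G, rootedCopies a (G.erase a) e x := by
  simp only [copyCount, rootedCopies, card_filter]
  rw [sum_comm, ← sum_add_distrib]
  refine sum_congr rfl fun v _ => ?_
  by_cases hroot : ∃ a ∈ G, mapEdge v a = e
  · obtain ⟨a, ha, rfl⟩ := hroot
    have hne {c : EdgeK m} (hc : c ≠ a) : mapEdge v c ≠ mapEdge v a :=
      (mapEdge_injective v).ne hc
    have habsent : ¬ ∀ c ∈ G, update x (mapEdge v a) false (mapEdge v c) = true :=
      fun h => by simpa using h a ha
    have hpresent : (∀ c ∈ G, update x (mapEdge v a) true (mapEdge v c) = true) ↔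
        ∀ c ∈ G.erase a, x (mapEdge v c) = true := by
      refine ⟨fun h c hc => ?_, fun h c hc => ?_⟩
      · rw [← update_of_ne (hne (ne_of_mem_erase hc)) true x]
        exact h c (mem_of_mem_erase hc)
      · rcases eq_or_ne c a with rfl | hca
        · exact update_self _ _ _
        · rw [update_of_ne (hne hca)]
          exact h c (mem_erase.2 ⟨hca, hc⟩)
    rw [sum_eq_single_of_mem a ha fun c _ hc => if_neg fun h => hne hc h.1, if_neg habsent,
      zero_add]
    exact if_congr (by rw [hpresent]; tauto) rfl rfl
  · push Not at hroot
    have hsame : (∀ a ∈ G, update x e true (mapEdge v a) = true) ↔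
        ∀ a ∈ G, update x e false (mapEdge v a) = true :=
      forall₂_congr fun a ha => by rw [update_of_ne (hroot a ha), update_of_ne (hroot a ha)]
    rw [sum_eq_zero fun a ha => if_neg fun h => hroot a ha h.1, add_zero]
    exact if_congr hsame rfl rfl

lemma dH_eq_sum_rootedCopies (x : Config n) (e : EdgeK n) :
    dH V Pt β n x e = ∑ i, β i / (n : ℝ) ^ (V i - 2) *
      ∑ a ∈ Pt i, (rootedCopies a ((Pt i).erase a) e x : ℝ) := by
  rw [dH, ergmH, ergmH, ← sum_sub_distrib]
  refine sum_congr rfl fun i _ => ?_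
  rw [setEdge_eq_update, setEdge_eq_update, copyCount_update_true]
  push_cast
  ring

lemma sum_rootedCopies_of_card_eq_one {m : ℕ} (hm : m = 2) {G : Finset (EdgeK m)} (hG : #G = 1)
    (x : Config n) (e : EdgeK n) :
    ∑ a ∈ G, (rootedCopies a (G.erase a) e x : ℝ) = 2 := by
  obtain ⟨a, rfl⟩ := card_eq_one.1 hG
  rw [sum_singleton, erase_singleton]
  simp [rootedCopies, card_filter_mapEdge_eq, hm]

lemma dH_mono (hβ : IsFerromagnetic Pt β) {x y : Config n} (hxy : x ≤ y) (e : EdgeK n) :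
    dH V Pt β n x e ≤ dH V Pt β n y e := by
  simp only [dH_eq_sum_rootedCopies]
  refine sum_le_sum fun i _ => ?_
  rcases hβ i with hpos | ⟨hV, hcard⟩
  · gcongr with a
    exact rootedCopies_mono _ _ _ hxy
  · simp only [sum_rootedCopies_of_card_eq_one hV hcard, le_refl]

lemma dH_update (x : Config n) (e : EdgeK n) (b : Bool) :
    dH V Pt β n (update x e b) e = dH V Pt β n x e := by
  simp only [dH, setEdge_eq_update, update_idem]

lemma isAttractive_updateProb (hβ : IsFerromagnetic Pt β) :
    IsAttractive (updateProb Pt β n) where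
  mem_Icc _ _ := ⟨(Real.sigmoid_pos _).le, (Real.sigmoid_lt_one _).le⟩
  monotone _ _ hxy e := Real.sigmoid_monotone (dH_mono hβ hxy e)

lemma glauber_dotProduct (x : Config n) (f : Config n → ℝ) :
    glauber V Pt β n x ⬝ᵥ f = heatBath (updateProb Pt β n) f x := by
  simp only [dotProduct, glauber, exp_div_one_add_exp, one_div_one_add_exp, setEdge_eq_update,
    heatBath_apply, card_edgeK, mul_assoc, ← mul_sum]
  simp only [sum_mul]
  rw [sum_comm]
  simp only [add_mul, ite_mul, zero_mul, sum_add_distrib, sum_ite_eq', mem_univ, if_true,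
    resample_apply, updateProb]

lemma gibbs_mem_stdSimplex : gibbs V Pt β n ∈ stdSimplex ℝ (Config n) := by
  have hZ : 0 < ∑ y : Config n, Real.exp (ergmH V Pt β n y) :=
    sum_pos (fun _ _ => Real.exp_pos _) univ_nonempty
  refine ⟨fun x => div_nonneg (Real.exp_pos _).le hZ.le, ?_⟩
  simp only [gibbs, ← sum_div, div_self hZ.ne']

lemma gibbs_detailed_balance (x : Config n) (e : EdgeK n) :
    gibbs V Pt β n (update x e true) * (1 - updateProb Pt β n x e) =
      gibbs V Pt β n (update x e false) * updateProb Pt β n x e := by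
  simp only [updateProb, ← exp_div_one_add_exp, gibbs, dH, setEdge_eq_update, Real.exp_sub]
  field_simp
  ring

lemma gibbs_dotProduct_heatBath_pow [Nonempty (EdgeK n)] (t : ℕ) (f : Config n → ℝ) :
    gibbs V Pt β n ⬝ᵥ (heatBath (updateProb Pt β n) ^ t) f = gibbs V Pt β n ⬝ᵥ f :=
  dotProduct_heatBath_pow (fun x e b => by simp only [updateProb, dH_update])
    gibbs_detailed_balance t f

end Model

section Atypical

variable {s : ℕ} {V : Fin s → ℕ} {n : ℕ} {ς p δ : ℝ}

/-- The graphs in which some rooted copy count of a pattern on `V i` vertices deviates by more than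
`δ n ^ (V i - 2)` from its typical value at edge density `p`, upwards if `ς = 1` and downwards if
`ς = -1`. -/
def atypical (V : Fin s → ℕ) (n : ℕ) (ς p δ : ℝ) : Set (Config n) :=
  {x | ∃ i, ∃ (a : EdgeK (V i)) (C : Finset (EdgeK (V i))) (e : EdgeK n), a ∉ C ∧
    δ * (n : ℝ) ^ (V i - 2) < ς * (rootedCopies a C e x - 2 * p ^ #C * (n : ℝ) ^ (V i - 2))}

lemma rootedCopies_le_of_notMem_atypical {x : Config n} (hx : x ∉ atypical V n ς p δ) {i : Fin s}
    {a : EdgeK (V i)} {C : Finset (EdgeK (V i))} (ha : a ∉ C) (e : EdgeK n) :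
    ς * (rootedCopies a C e x - 2 * p ^ #C * (n : ℝ) ^ (V i - 2)) ≤ δ * (n : ℝ) ^ (V i - 2) :=
  not_lt.1 fun h => hx ⟨i, a, C, e, ha, h⟩

lemma monotone_indicator_atypical (hς : ς = 1 ∨ ς = -1) :
    Monotone (ς • (atypical V n ς p δ).indicator (1 : Config n → ℝ)) := by
  intro x y hxy
  rcases hς with rfl | rfl
  · have hupper : x ∈ atypical V n 1 p δ → y ∈ atypical V n 1 p δ := by
      rintro ⟨i, a, C, e, ha, hlt⟩
      refine ⟨i, a, C, e, ha, hlt.trans_le ?_⟩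
      gcongr
      exact rootedCopies_mono a C e hxy
    by_cases hx : x ∈ atypical V n 1 p δ
    · simp [hx, hupper hx]
    · simp only [one_smul, Set.indicator_of_notMem hx]
      exact Set.indicator_nonneg (fun _ _ => zero_le_one) y
  · have hlower : y ∈ atypical V n (-1) p δ → x ∈ atypical V n (-1) p δ := by
      rintro ⟨i, a, C, e, ha, hlt⟩
      refine ⟨i, a, C, e, ha, hlt.trans_le ?_⟩
      rw [neg_one_mul, neg_one_mul, neg_le_neg_iff]
      gcongr
      exact rootedCopies_mono a C e hxy
    by_cases hy : y ∈ atypical V n (-1) p δ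
    · simp [hy, hlower hy]
    · simp only [Pi.smul_apply, neg_smul, one_smul, Set.indicator_of_notMem hy, neg_zero,
        Left.neg_nonpos_iff]
      exact Set.indicator_nonneg (fun _ _ => zero_le_one) x

/-- The number of patterns with a root edge on the vertex sets `V i`. -/
def numRootedPatterns (V : Fin s → ℕ) : ℕ :=
  Fintype.card (Σ i, EdgeK (V i) × Finset (EdgeK (V i)))

/-- A bound for the squared influences of single edges on the rooted copy counts, in units of
`n ^ (2 * (V i - 2)) / n`. -/
def influenceBound (V : Fin s → ℕ) : ℝ := 1 + ∑ i, 16 * (Fintype.card (EdgeK (V i)) : ℝ) ^ 2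

lemma influenceBound_pos (V : Fin s → ℕ) : 0 < influenceBound V := by
  unfold influenceBound
  positivity

lemma card_sq_le_influenceBound (i : Fin s) (C : Finset (EdgeK (V i))) :
    16 * (#C : ℝ) ^ 2 ≤ influenceBound V := by
  calc 16 * (#C : ℝ) ^ 2 ≤ 16 * (Fintype.card (EdgeK (V i)) : ℝ) ^ 2 := by
        gcongr
        exact card_le_univ C
    _ ≤ ∑ i, 16 * (Fintype.card (EdgeK (V i)) : ℝ) ^ 2 :=
        single_le_sum (f := fun i => 16 * (Fintype.card (EdgeK (V i)) : ℝ) ^ 2)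
          (fun _ _ => by positivity) (mem_univ i)
    _ ≤ influenceBound V := le_add_of_nonneg_left zero_le_one

/-- An upper bound for the probability of `atypical V n ς p δ` under the Bernoulli product measure
of density `p`. -/
def atypicalProb (V : Fin s → ℕ) (n : ℕ) (δ : ℝ) : ℝ :=
  numRootedPatterns V * (n : ℝ) ^ 2 * Real.exp (-(δ ^ 2 * n / (8 * influenceBound V)))

lemma dotProduct_indicator_iUnion_le {α J : Type*} [Fintype α] [Fintype J] {μ : α → ℝ}
    (hμ : 0 ≤ μ) {B : J → Set α} {q : ℝ}
    (hB : ∀ j, μ ⬝ᵥ (B j).indicator 1 ≤ q) :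
    μ ⬝ᵥ (⋃ j, B j).indicator 1 ≤ Fintype.card J * q := by
  calc μ ⬝ᵥ (⋃ j, B j).indicator 1 ≤ μ ⬝ᵥ ∑ j, (B j).indicator 1 := by
        refine dotProduct_le_dotProduct_of_nonneg_left (fun x => ?_) hμ
        rw [Finset.sum_apply]
        refine Set.indicator_apply_le' (fun hx => ?_) fun _ =>
          sum_nonneg fun j _ => Set.indicator_nonneg (fun _ _ => zero_le_one) x
        obtain ⟨j, hj⟩ := Set.mem_iUnion.1 hx
        rw [← Set.indicator_of_mem hj (1 : α → ℝ)]
        exact single_le_sum (f := fun j => (B j).indicator (1 : α → ℝ) x)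
          (fun j _ => Set.indicator_nonneg (fun _ _ => zero_le_one) x) (mem_univ j)
    _ ≤ Fintype.card J * q := by
        rw [dotProduct_sum, ← nsmul_eq_mul, ← card_univ]
        exact sum_le_card_nsmul _ _ _ fun j _ => hB j

lemma bernoulliProd_dotProduct_indicator_atypical_le (hς : ς = 1 ∨ ς = -1)
    (hp : p ∈ Set.Icc (0 : ℝ) 1) (hn : ∀ i, V i ≤ n ∧ 4 * (V i : ℝ) ^ 2 ≤ δ * n) :
    bernoulliProd p ⬝ᵥ (atypical V n ς p δ).indicator 1 ≤ atypicalProb V n δ := by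
  have hunion : atypical V n ς p δ =
      ⋃ j : (Σ i, EdgeK (V i) × Finset (EdgeK (V i))) × EdgeK n, {x | j.1.2.1 ∉ j.1.2.2 ∧
        δ * (n : ℝ) ^ (V j.1.1 - 2) < ς * (rootedCopies j.1.2.1 j.1.2.2 j.2 x -
          2 * p ^ #j.1.2.2 * (n : ℝ) ^ (V j.1.1 - 2))} := by
    ext x
    simp only [atypical, Set.mem_ofPred_eq, Set.mem_iUnion, Prod.exists, Sigma.exists]
  rw [hunion]
  refine (dotProduct_indicator_iUnion_le (bernoulliProd_mem_stdSimplex hp).1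
    (q := Real.exp (-(δ ^ 2 * n / (8 * influenceBound V)))) fun j => ?_).trans ?_
  · by_cases ha : j.1.2.1 ∈ j.1.2.2
    · simp only [ha, not_true_eq_false, false_and, Set.ofPred_false, Set.indicator_empty]
      simp [Real.exp_nonneg]
    · simp only [ha, not_false_eq_true, true_and]
      exact bernoulliProd_dotProduct_rootedCopies_deviation_le hς hp ha
        (card_sq_le_influenceBound _ _) (influenceBound_pos V) (hn _).1 (hn _).2 _
  · rw [Fintype.card_prod, atypicalProb, numRootedPatterns, card_edgeK]
    push_cast
    gcongr
    exact_mod_cast Nat.choose_le_pow n 2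

end Atypical

section Field

variable {s : ℕ} {V : Fin s → ℕ} {Pt : ∀ i, Finset (EdgeK (V i))} {β : Fin s → ℝ} {n : ℕ}
  {ς p δ : ℝ}

/-- A Lipschitz constant for the local field as a function of the normalised rooted copy counts. -/
def fieldLipschitz (Pt : ∀ i, Finset (EdgeK (V i))) (β : Fin s → ℝ) : ℝ :=
  1 + ∑ i, |β i| * (#(Pt i) : ℝ) ^ 2

lemma fieldLipschitz_pos (Pt : ∀ i, Finset (EdgeK (V i))) (β : Fin s → ℝ) :
    0 < fieldLipschitz Pt β := by
  unfold fieldLipschitz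
  positivity

lemma sign_mul_dH_sub_PsiF_le (hβ : IsFerromagnetic Pt β) (hδ : 0 ≤ δ) {x : Config n}
    (hx : x ∉ atypical V n ς p δ) (e : EdgeK n) :
    ς * (dH V Pt β n x e - PsiF Pt β p) ≤ fieldLipschitz Pt β * δ := by
  have hn : (0 : ℝ) < n := Nat.cast_pos.2 (by have := two_le_of_edgeK e; lia)
  suffices h : ς * (dH V Pt β n x e - PsiF Pt β p) ≤ ∑ i, |β i| * (#(Pt i) : ℝ) ^ 2 * δ by
    rw [fieldLipschitz, add_mul, sum_mul]
    linarith
  rw [dH_eq_sum_rootedCopies, PsiF, ← sum_sub_distrib, mul_sum]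
  refine sum_le_sum fun i _ => ?_
  rcases hβ i with hpos | ⟨hV, hcard⟩
  · have hroots : ∑ a ∈ Pt i, ς * (rootedCopies a ((Pt i).erase a) e x -
        2 * p ^ (#(Pt i) - 1) * (n : ℝ) ^ (V i - 2)) ≤ #(Pt i) * (δ * (n : ℝ) ^ (V i - 2)) := by
      rw [← nsmul_eq_mul]
      refine sum_le_card_nsmul _ _ _ fun a ha => ?_
      rw [← card_erase_of_mem ha]
      exact rootedCopies_le_of_notMem_atypical hx (notMem_erase a _) e
    calc _ = β i / (n : ℝ) ^ (V i - 2) * ∑ a ∈ Pt i, ς * (rootedCopies a ((Pt i).erase a) e x -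
          2 * p ^ (#(Pt i) - 1) * (n : ℝ) ^ (V i - 2)) := by
          rw [← mul_sum, sum_sub_distrib, sum_const, nsmul_eq_mul]
          field_simp
      _ ≤ β i / (n : ℝ) ^ (V i - 2) * (#(Pt i) * (δ * (n : ℝ) ^ (V i - 2))) := by gcongr
      _ = β i * #(Pt i) * δ := by field_simp
      _ ≤ |β i| * (#(Pt i) : ℝ) ^ 2 * δ := by
          gcongr
          · exact le_abs_self _
          · exact_mod_cast Nat.le_self_pow two_ne_zero _
  · calc _ = (0 : ℝ) := by
          simp only [sum_rootedCopies_of_card_eq_one hV hcard, hcard, hV, le_refl,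
            Nat.sub_eq_zero_of_le, pow_zero]
          ring
      _ ≤ _ := by positivity

lemma sum_rootedCopies {m : ℕ} (a : EdgeK m) (C : Finset (EdgeK m)) (x : Config n) :
    ∑ e, rootedCopies a C e x = #{v : Fin m ↪ Fin n | ∀ c ∈ C, x (mapEdge v c) = true} := by
  rw [card_eq_sum_card_fiberwise (f := fun v => mapEdge v a) (t := univ) fun _ _ => mem_univ _]
  exact sum_congr rfl fun e _ => congrArg card (by rw [filter_filter]; simp only [and_comm])

lemma sum_rootedCopies_le {m : ℕ} (a : EdgeK m) (C : Finset (EdgeK m)) (x y : Config n) :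
    ∑ e, rootedCopies a C e y ≤ ∑ e, rootedCopies a C e x +
      ∑ b ∈ C, ∑ f with x f < y f, rootedCopies b (C.erase b) f y := by
  have hfiber (b : EdgeK m) : ∑ f with x f < y f, rootedCopies b (C.erase b) f y =
      #{v : Fin m ↪ Fin n | x (mapEdge v b) < y (mapEdge v b) ∧
        ∀ c ∈ C.erase b, y (mapEdge v c) = true} := by
    rw [card_eq_sum_card_fiberwise (f := fun v => mapEdge v b) (t := {f | x f < y f})
      fun v hv => by simpa using (mem_filter.1 hv).2.1]
    refine sum_congr rfl fun f hf => congrArg card ?_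
    ext v
    simp only [mem_filter, mem_univ, true_and] at hf ⊢
    exact ⟨fun h => ⟨⟨h.1 ▸ hf, h.2⟩, h.1⟩, fun h => ⟨h.2, h.1.2⟩⟩
  rw [sum_rootedCopies, sum_rootedCopies, sum_congr rfl fun b _ => hfiber b]
  refine (card_le_card fun v hv => ?_).trans
    ((card_union_le _ _).trans (Nat.add_le_add_left card_biUnion_le _))
  simp only [mem_union, mem_biUnion, mem_filter, mem_univ, true_and] at hv ⊢
  by_cases hall : ∀ c ∈ C, x (mapEdge v c) = true
  · exact Or.inl hall
  · push Not at hall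
    obtain ⟨b, hb, hxb⟩ := hall
    refine Or.inr ⟨b, hb, ?_, fun c hc => hv c (mem_of_mem_erase hc)⟩
    rw [hv b hb, Bool.eq_false_of_not_eq_true hxb]
    exact Bool.false_lt_true

lemma card_filter_lt_eq_numTrue_sub {x y : Config n} (hxy : x ≤ y) :
    (#{f | x f < y f} : ℝ) = numTrue y - numTrue x := by
  rw [numTrue, numTrue, ← sum_sub_distrib, ← sum_boole]
  refine sum_congr rfl fun f _ => ?_
  have hf := hxy f
  cases hx : x f <;> cases hy : y f <;> simp_all [Bool.le_iff_imp, Bool.lt_iff]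

lemma hasDerivAt_PsiF (Pt : ∀ i, Finset (EdgeK (V i))) (β : Fin s → ℝ) (p : ℝ) :
    HasDerivAt (PsiF Pt β)
      (∑ i, 2 * β i * #(Pt i) * ((#(Pt i) - 1 : ℕ) * p ^ (#(Pt i) - 1 - 1))) p :=
  HasDerivAt.fun_sum fun _ _ => (hasDerivAt_pow _ p).const_mul _

lemma sum_sum_rootedCopies_erase_sub_le {i : Fin s} {x y : Config n} (hxy : x ≤ y)
    (hy : y ∉ atypical V n 1 p δ) {a : EdgeK (V i)} (G : Finset (EdgeK (V i))) (ha : a ∈ G) :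
    (∑ e, rootedCopies a (G.erase a) e y : ℝ) - ∑ e, (rootedCopies a (G.erase a) e x : ℝ) ≤
      (#G - 1 : ℕ) * ((2 * p ^ (#G - 1 - 1) + δ) * (n : ℝ) ^ (V i - 2) *
        (numTrue y - numTrue x)) := by
  have hincr : (∑ e, rootedCopies a (G.erase a) e y : ℝ) ≤
      ∑ e, (rootedCopies a (G.erase a) e x : ℝ) +
        ∑ b ∈ G.erase a, ∑ f with x f < y f, (rootedCopies b ((G.erase a).erase b) f y : ℝ) :=
    mod_cast sum_rootedCopies_le a (G.erase a) x y
  refine (sub_le_iff_le_add'.2 hincr).trans ?_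
  rw [← card_erase_of_mem ha, ← card_filter_lt_eq_numTrue_sub hxy, mul_comm (_ * _) (_ : ℝ),
    ← nsmul_eq_mul, ← nsmul_eq_mul]
  refine sum_le_card_nsmul _ _ _ fun b hb => sum_le_card_nsmul _ _ _ fun f _ => ?_
  rw [← card_erase_of_mem hb]
  linarith [rootedCopies_le_of_notMem_atypical hy (notMem_erase b (G.erase a)) f]

lemma sum_sum_rootedCopies_sub_le (hn : 0 < n) {i : Fin s} {x y : Config n} (hxy : x ≤ y)
    (hy : y ∉ atypical V n 1 p δ) {b : ℝ} (hb : 0 ≤ b) (hδ : 0 ≤ δ) :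
    ∑ e, b / (n : ℝ) ^ (V i - 2) * ∑ a ∈ Pt i, (rootedCopies a ((Pt i).erase a) e y : ℝ) -
        ∑ e, b / (n : ℝ) ^ (V i - 2) * ∑ a ∈ Pt i, (rootedCopies a ((Pt i).erase a) e x : ℝ) ≤
      (2 * b * #(Pt i) * ((#(Pt i) - 1 : ℕ) * p ^ (#(Pt i) - 1 - 1)) +
        |b| * (#(Pt i) : ℝ) ^ 2 * δ) * (numTrue y - numTrue x) := by
  have hN : 0 ≤ numTrue y - numTrue x := sub_nonneg.2 (numTrue_mono hxy)
  have hpow : 0 < (n : ℝ) ^ (V i - 2) := pow_pos (Nat.cast_pos.2 hn) _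
  have hroots := sum_le_card_nsmul _ _ _ fun a ha =>
    sum_sum_rootedCopies_erase_sub_le hxy hy (Pt i) (a := a) ha
  rw [nsmul_eq_mul] at hroots
  calc _ = b / (n : ℝ) ^ (V i - 2) * ∑ a ∈ Pt i,
        (∑ e, (rootedCopies a ((Pt i).erase a) e y : ℝ) -
          ∑ e, (rootedCopies a ((Pt i).erase a) e x : ℝ)) := by
        rw [← mul_sum, ← mul_sum, ← mul_sub, sum_comm, sum_comm (s := univ (α := EdgeK n)),
          ← sum_sub_distrib]
    _ ≤ _ := mul_le_mul_of_nonneg_left hroots (div_nonneg hb hpow.le)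
    _ = (2 * b * #(Pt i) * ((#(Pt i) - 1 : ℕ) * p ^ (#(Pt i) - 1 - 1)) +
        b * (#(Pt i) * (#(Pt i) - 1 : ℕ)) * δ) * (numTrue y - numTrue x) := by
        field_simp
    _ ≤ _ := by
        rw [sq]
        gcongr
        · exact le_abs_self _
        · exact Nat.sub_le _ _

lemma sum_dH_sub_le (hβ : IsFerromagnetic Pt β) (hδ : 0 ≤ δ) (hn : 0 < n) {x y : Config n}
    (hxy : x ≤ y) (hy : y ∉ atypical V n 1 p δ) :
    ∑ e, dH V Pt β n y e - ∑ e, dH V Pt β n x e ≤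
      (deriv (PsiF Pt β) p + fieldLipschitz Pt β * δ) * (numTrue y - numTrue x) := by
  have hN : 0 ≤ numTrue y - numTrue x := sub_nonneg.2 (numTrue_mono hxy)
  suffices h : ∑ e, dH V Pt β n y e - ∑ e, dH V Pt β n x e ≤
      (deriv (PsiF Pt β) p + ∑ i, |β i| * (#(Pt i) : ℝ) ^ 2 * δ) * (numTrue y - numTrue x) by
    refine h.trans (mul_le_mul_of_nonneg_right ?_ hN)
    rw [fieldLipschitz, add_mul, sum_mul]
    linarith
  rw [(hasDerivAt_PsiF Pt β p).deriv, ← sum_add_distrib, sum_mul]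
  simp only [dH_eq_sum_rootedCopies]
  rw [sum_comm, sum_comm (s := univ (α := EdgeK n)), ← sum_sub_distrib]
  refine sum_le_sum fun i _ => ?_
  rcases hβ i with hpos | ⟨hV, hcard⟩
  · exact sum_sum_rootedCopies_sub_le hn hxy hy hpos hδ
  · simp only [sum_rootedCopies_of_card_eq_one hV hcard, sub_self, hcard]
    refine mul_nonneg ?_ hN
    norm_num
    positivity

end Field

/-! ### The mean-field map -/

section FixedPoint

variable {s : ℕ} {V : Fin s → ℕ} {Pt : ∀ i, Finset (EdgeK (V i))} {β : Fin s → ℝ}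
  {pstar η ε p : ℝ}

lemma sigmoid_sub_le_mul_sub {lo hi lam z w : ℝ}
    (h : ∀ v ∈ Set.Icc lo hi, deriv Real.sigmoid v ≤ lam) (hz : lo ≤ z) (hzw : z ≤ w)
    (hw : w ≤ hi) : Real.sigmoid w - Real.sigmoid z ≤ lam * (w - z) := by
  refine Convex.image_sub_le_mul_sub_of_deriv_le (convex_Icc lo hi)
    continuous_sigmoid.continuousOn differentiable_sigmoid.differentiableOn
    (fun v hv => h v (interior_subset hv)) z ⟨hz, hzw.trans hw⟩ w ⟨hz.trans hzw, hw⟩ hzw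

lemma abs_sigmoid_add_sub_le (z ε : ℝ) : |Real.sigmoid (z + ε) - Real.sigmoid z| ≤ |ε| := by
  have hbound (w : ℝ) : ‖deriv Real.sigmoid w‖ ≤ 1 := by
    rw [Real.deriv_sigmoid, Real.norm_eq_abs, abs_le]
    constructor <;> nlinarith [Real.sigmoid_pos w, Real.sigmoid_lt_one w]
  simpa using convex_univ.norm_image_sub_le_of_norm_deriv_le
    (fun w _ => differentiableAt_sigmoid) (fun w _ => hbound w) (Set.mem_univ z)
    (Set.mem_univ (z + ε))

lemma continuous_PsiF (Pt : ∀ i, Finset (EdgeK (V i))) (β : Fin s → ℝ) :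
    Continuous (PsiF Pt β) :=
  continuous_iff_continuousAt.2 fun p => (hasDerivAt_PsiF Pt β p).continuousAt

lemma continuous_deriv_PsiF (Pt : ∀ i, Finset (EdgeK (V i))) (β : Fin s → ℝ) :
    Continuous (deriv (PsiF Pt β)) := by
  rw [funext fun p => (hasDerivAt_PsiF Pt β p).deriv]
  fun_prop

lemma monotoneOn_PsiF (hβ : IsFerromagnetic Pt β) :
    MonotoneOn (PsiF Pt β) (Set.Icc 0 1) := by
  intro p hp q _ hpq
  refine sum_le_sum fun i _ => ?_
  have := hp.1
  rcases hβ i with hpos | ⟨_, hcard⟩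
  · gcongr
  · simp [hcard]

lemma phiF_eq_sigmoid_comp (Pt : ∀ i, Finset (EdgeK (V i))) (β : Fin s → ℝ) :
    phiF Pt β = Real.sigmoid ∘ PsiF Pt β :=
  funext fun p => exp_div_one_add_exp (PsiF Pt β p)

lemma hasDerivAt_phiF (Pt : ∀ i, Finset (EdgeK (V i))) (β : Fin s → ℝ) (p : ℝ) :
    HasDerivAt (phiF Pt β) (deriv Real.sigmoid (PsiF Pt β p) * deriv (PsiF Pt β) p) p := by
  rw [phiF_eq_sigmoid_comp]
  exact differentiableAt_sigmoid.hasDerivAt.comp p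
    (hasDerivAt_PsiF Pt β p).differentiableAt.hasDerivAt

lemma monotoneOn_phiF (hβ : IsFerromagnetic Pt β) : MonotoneOn (phiF Pt β) (Set.Icc 0 1) :=
  phiF_eq_sigmoid_comp Pt β ▸ Real.sigmoid_monotone.comp_monotoneOn (monotoneOn_PsiF hβ)

lemma continuous_dslope_phiF (Pt : ∀ i, Finset (EdgeK (V i))) (β : Fin s → ℝ) (p : ℝ) :
    Continuous (dslope (phiF Pt β) p) := by
  refine continuous_iff_continuousAt.2 fun q => ?_
  rcases eq_or_ne q p with rfl | hqp
  · exact continuousAt_dslope_same.2 (hasDerivAt_phiF Pt β q).differentiableAt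
  · exact (continuousAt_dslope_of_ne hqp).2 (hasDerivAt_phiF Pt β q).continuousAt

lemma phiF_sub_eq_mul_dslope (hHT : HighTemp Pt β pstar) (p : ℝ) :
    phiF Pt β p - pstar = (p - pstar) * dslope (phiF Pt β) pstar p := by
  rw [← smul_eq_mul, sub_smul_dslope, hHT.2.1]

-- Away from `pstar` the slope takes the value `1` exactly at the fixed points of `phiF`, of which
-- there are none, and at `pstar` it is less than `1`; hence it stays below `1`.
lemma dslope_phiF_lt_one (hHT : HighTemp Pt β pstar) (hp : p ∈ Set.Icc (0 : ℝ) 1) :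
    dslope (phiF Pt β) pstar p < 1 := by
  by_contra! hge
  have hlt : dslope (phiF Pt β) pstar pstar < 1 := by
    rw [dslope_same]
    exact hHT.2.2.2
  obtain ⟨q, hq, hq₁⟩ := isPreconnected_Icc.intermediate_value hHT.1 hp
    (continuous_dslope_phiF Pt β pstar).continuousOn ⟨hlt.le, hge⟩
  have hfix : phiF Pt β q = q := by
    have := phiF_sub_eq_mul_dslope hHT q
    rw [hq₁] at this
    linarith
  rw [hHT.2.2.1 q hq hfix] at hq₁
  exact hlt.ne hq₁

lemma exists_abs_phiF_sub_le (hβ : IsFerromagnetic Pt β) (hHT : HighTemp Pt β pstar) :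
    ∃ η ∈ Set.Ioo (0 : ℝ) 1, ∀ p ∈ Set.Icc (0 : ℝ) 1,
      |phiF Pt β p - pstar| ≤ (1 - η) * |p - pstar| := by
  obtain ⟨q, hq, hmax⟩ := isCompact_Icc.exists_isMaxOn ⟨pstar, hHT.1⟩
    (continuous_dslope_phiF Pt β pstar).continuousOn
  obtain ⟨c, hqc, hc⟩ := exists_between (max_lt (dslope_phiF_lt_one hHT hq) zero_lt_one)
  rw [max_lt_iff] at hqc
  refine ⟨1 - c, ⟨by linarith, by linarith⟩, fun p hp => ?_⟩
  rcases eq_or_ne p pstar with rfl | hne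
  · simp [hHT.2.1]
  have hslope : 0 ≤ dslope (phiF Pt β) pstar p := by
    rw [dslope_of_ne _ hne]
    exact (monotoneOn_phiF hβ).slope_nonneg hHT.1 hp
  rw [phiF_sub_eq_mul_dslope hHT, abs_mul, abs_of_nonneg hslope, sub_sub_cancel, mul_comm]
  exact mul_le_mul_of_nonneg_right ((hmax hp).trans hqc.1.le) (abs_nonneg _)

/-- The mean-field map `phiF` with the local field shifted by `ε`. -/
def tiltedPhiF (Pt : ∀ i, Finset (EdgeK (V i))) (β : Fin s → ℝ) (ε p : ℝ) : ℝ :=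
  Real.sigmoid (PsiF Pt β p + ε)

lemma tiltedPhiF_iterate_mem_Icc (Pt : ∀ i, Finset (EdgeK (V i))) (β : Fin s → ℝ) (ε : ℝ)
    (hp : p ∈ Set.Icc (0 : ℝ) 1) (k : ℕ) :
    (tiltedPhiF Pt β ε)^[k] p ∈ Set.Icc (0 : ℝ) 1 := by
  cases k with
  | zero => exact hp
  | succ k =>
    rw [iterate_succ_apply']
    exact ⟨Real.sigmoid_nonneg _, Real.sigmoid_le_one _⟩

lemma abs_tiltedPhiF_iterate_sub_le (hHT : HighTemp Pt β pstar) (hη : η ∈ Set.Ioo (0 : ℝ) 1)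
    (hcontr : ∀ p ∈ Set.Icc (0 : ℝ) 1, |phiF Pt β p - pstar| ≤ (1 - η) * |p - pstar|)
    (ε : ℝ) (hp : p ∈ Set.Icc (0 : ℝ) 1) (k : ℕ) :
    |(tiltedPhiF Pt β ε)^[k] p - pstar| ≤ (1 - η) ^ k + |ε| / η := by
  induction k with
  | zero =>
    have herr : 0 ≤ |ε| / η := div_nonneg (abs_nonneg _) hη.1.le
    rw [iterate_zero_apply, pow_zero, abs_le]
    constructor <;> linarith [hp.1, hp.2, hHT.1.1, hHT.1.2]
  | succ k ih =>
    rw [iterate_succ_apply']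
    set q := (tiltedPhiF Pt β ε)^[k] p
    have hq : q ∈ Set.Icc (0 : ℝ) 1 := tiltedPhiF_iterate_mem_Icc Pt β ε hp k
    have htilt : |tiltedPhiF Pt β ε q - phiF Pt β q| ≤ |ε| := by
      rw [phiF_eq_sigmoid_comp]
      exact abs_sigmoid_add_sub_le _ _
    calc |tiltedPhiF Pt β ε q - pstar|
        ≤ |tiltedPhiF Pt β ε q - phiF Pt β q| + |phiF Pt β q - pstar| := abs_sub_le _ _ _
      _ ≤ |ε| + (1 - η) * ((1 - η) ^ k + |ε| / η) :=
          add_le_add htilt ((hcontr q hq).trans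
            (mul_le_mul_of_nonneg_left ih (sub_nonneg.2 hη.2.le)))
      _ = (1 - η) ^ (k + 1) + |ε| / η := by
          have := hη.1.ne'
          field_simp
          ring

lemma eventually_deriv_sigmoid_le {z lam : ℝ} (h : deriv Real.sigmoid z < lam) :
    ∀ᶠ w in 𝓝 z, deriv Real.sigmoid w ≤ lam := by
  have hcont : Continuous (deriv Real.sigmoid) := by
    rw [Real.deriv_sigmoid]
    fun_prop
  exact (hcont.tendsto z).eventually_le_const h

lemma exists_deriv_sigmoid_le_near_fixedPoint (hHT : HighTemp Pt β pstar) :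
    ∃ κ ∈ Set.Ioo (0 : ℝ) 1, ∃ lam > 0, ∃ r > 0, ∀ u l ε : ℝ,
      |u - pstar| ≤ r → |l - pstar| ≤ r → |ε| ≤ r →
      (∀ v ∈ Set.Icc (PsiF Pt β l - ε) (PsiF Pt β u + ε), deriv Real.sigmoid v ≤ lam) ∧
        lam * (deriv (PsiF Pt β) u + ε) ≤ 1 - κ := by
  have hder : deriv Real.sigmoid (PsiF Pt β pstar) * deriv (PsiF Pt β) pstar < 1 :=
    (hasDerivAt_phiF Pt β pstar).deriv ▸ hHT.2.2.2
  have hpos : 0 < deriv Real.sigmoid (PsiF Pt β pstar) := by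
    rw [Real.deriv_sigmoid]
    exact mul_pos (Real.sigmoid_pos _) (sub_pos.2 (Real.sigmoid_lt_one _))
  have hright : ∀ᶠ lam in 𝓝[>] (deriv Real.sigmoid (PsiF Pt β pstar)),
      lam * deriv (PsiF Pt β) pstar < 1 :=
    (((continuous_mul_const _).tendsto _).eventually_lt_const hder).filter_mono
      nhdsWithin_le_nhds
  obtain ⟨lam, hprod, hlam⟩ := (hright.and self_mem_nhdsWithin).exists
  obtain ⟨c, hc, hc₁⟩ := exists_between (max_lt hprod zero_lt_one)
  rw [max_lt_iff] at hc
  have hΨ := continuous_PsiF Pt β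
  have hΨ' := continuous_deriv_PsiF Pt β
  have hnear : ∀ᶠ q : ℝ × ℝ × ℝ in 𝓝 (pstar, pstar, 0),
      (∀ v ∈ Set.Icc (PsiF Pt β q.2.1 - q.2.2) (PsiF Pt β q.1 + q.2.2),
        deriv Real.sigmoid v ≤ lam) ∧ lam * (deriv (PsiF Pt β) q.1 + q.2.2) ≤ c := by
    have hlo : Tendsto (fun q : ℝ × ℝ × ℝ => PsiF Pt β q.2.1 - q.2.2) (𝓝 (pstar, pstar, 0))
        (𝓝 (PsiF Pt β pstar)) := Continuous.tendsto' (by fun_prop) _ _ (sub_zero _)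
    have hhi : Tendsto (fun q : ℝ × ℝ × ℝ => PsiF Pt β q.1 + q.2.2) (𝓝 (pstar, pstar, 0))
        (𝓝 (PsiF Pt β pstar)) := Continuous.tendsto' (by fun_prop) _ _ (add_zero _)
    have hder' : Tendsto (fun q : ℝ × ℝ × ℝ => lam * (deriv (PsiF Pt β) q.1 + q.2.2))
        (𝓝 (pstar, pstar, 0)) (𝓝 (lam * deriv (PsiF Pt β) pstar)) :=
      Continuous.tendsto' (by fun_prop) _ _ (congrArg (lam * ·) (add_zero _))
    exact ((hlo.Icc hhi).eventually (eventually_deriv_sigmoid_le hlam).smallSets).and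
      (hder'.eventually_le_const hc.1)
  obtain ⟨r, hr, hball⟩ := Metric.nhds_basis_closedBall.eventually_iff.1 hnear
  refine ⟨1 - c, ⟨by linarith, by linarith⟩, lam, hpos.trans hlam, r, hr, fun u l ε hu hl hε => ?_⟩
  rw [sub_sub_cancel]
  refine hball (x := (u, l, ε)) ?_
  simp only [Metric.mem_closedBall, Prod.dist_eq, Real.dist_eq, sub_zero, max_le_iff]
  exact ⟨hu, hl, hε⟩

lemma exists_sum_updateProb_sub_le (hβ : IsFerromagnetic Pt β) (hHT : HighTemp Pt β pstar) :
    ∃ κ ∈ Set.Ioo (0 : ℝ) 1, ∃ r > 0, ∀ (n : ℕ) (u l δ : ℝ), 0 < n →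
      |u - pstar| ≤ r → |l - pstar| ≤ r → 0 ≤ δ → fieldLipschitz Pt β * δ ≤ r →
      ∀ x ∉ atypical V n (-1) l δ, ∀ y ∉ atypical V n 1 u δ, x ≤ y →
        ∑ e, updateProb Pt β n y e - ∑ e, updateProb Pt β n x e ≤
          (1 - κ) * (numTrue y - numTrue x) := by
  obtain ⟨κ, hκ, lam, hlam, r, hr, hloc⟩ := exists_deriv_sigmoid_le_near_fixedPoint hHT
  refine ⟨κ, hκ, r, hr, fun n u l δ hn hu hl hδ hδr x hx y hy hxy => ?_⟩
  have hK : 0 ≤ fieldLipschitz Pt β * δ := mul_nonneg (fieldLipschitz_pos Pt β).le hδ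
  obtain ⟨hsig, hprod⟩ := hloc u l _ hu hl (by rwa [abs_of_nonneg hK])
  calc ∑ e, updateProb Pt β n y e - ∑ e, updateProb Pt β n x e
      ≤ lam * (∑ e, dH V Pt β n y e - ∑ e, dH V Pt β n x e) := by
        rw [← sum_sub_distrib, ← sum_sub_distrib, mul_sum]
        refine sum_le_sum fun e _ => sigmoid_sub_le_mul_sub hsig ?_ (dH_mono hβ hxy e) ?_
        · linarith [sign_mul_dH_sub_PsiF_le hβ hδ hx e]
        · linarith [sign_mul_dH_sub_PsiF_le hβ hδ hy e]
    _ ≤ lam * (deriv (PsiF Pt β) u + fieldLipschitz Pt β * δ) * (numTrue y - numTrue x) := by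
        rw [mul_assoc]
        exact mul_le_mul_of_nonneg_left (sum_dH_sub_le hβ hδ hn hxy hy) hlam.le
    _ ≤ (1 - κ) * (numTrue y - numTrue x) :=
        mul_le_mul_of_nonneg_right hprod (sub_nonneg.2 (numTrue_mono hxy))

end FixedPoint

/-! ### Mixing times -/

section NonAsymptotic

variable {s : ℕ} {V : Fin s → ℕ} {Pt : ∀ i, Finset (EdgeK (V i))} {β : Fin s → ℝ}
  {n k T T' t : ℕ} {pstar η ς κ δ ρ d : ℝ}

lemma nonempty_edgeK (hn : 2 ≤ n) : Nonempty (EdgeK n) := by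
  rw [← Fintype.card_pos_iff, card_edgeK]
  exact Nat.choose_pos hn

/-- The `k`-th one-sided bound on the edge density during the burn-in: the mean-field iterates
started from density `1` with local field tilted upwards if `ς = 1`, and from density `0` with
local field tilted downwards if `ς = -1`. -/
def densityBound (Pt : ∀ i, Finset (EdgeK (V i))) (β : Fin s → ℝ) (ς δ : ℝ) (k : ℕ) : ℝ :=
  (tiltedPhiF Pt β (ς * (fieldLipschitz Pt β * δ)))^[k] ((1 + ς) / 2)

lemma densityBound_succ (Pt : ∀ i, Finset (EdgeK (V i))) (β : Fin s → ℝ) (ς δ : ℝ) (k : ℕ) :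
    densityBound Pt β ς δ (k + 1) =
      tiltedPhiF Pt β (ς * (fieldLipschitz Pt β * δ)) (densityBound Pt β ς δ k) :=
  iterate_succ_apply' _ _ _

lemma densityBound_mem_Icc (Pt : ∀ i, Finset (EdgeK (V i))) (β : Fin s → ℝ)
    (hς : ς = 1 ∨ ς = -1) (δ : ℝ) (k : ℕ) : densityBound Pt β ς δ k ∈ Set.Icc (0 : ℝ) 1 :=
  tiltedPhiF_iterate_mem_Icc Pt β _ (by rcases hς with rfl | rfl <;> norm_num) k

lemma abs_densityBound_sub_le (hHT : HighTemp Pt β pstar) (hη : η ∈ Set.Ioo (0 : ℝ) 1)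
    (hcontr : ∀ p ∈ Set.Icc (0 : ℝ) 1, |phiF Pt β p - pstar| ≤ (1 - η) * |p - pstar|)
    (hς : ς = 1 ∨ ς = -1) (hδ : 0 ≤ δ) (k : ℕ) :
    |densityBound Pt β ς δ k - pstar| ≤ (1 - η) ^ k + fieldLipschitz Pt β * δ / η := by
  have hK : 0 ≤ fieldLipschitz Pt β * δ := mul_nonneg (fieldLipschitz_pos Pt β).le hδ
  have habs : |ς * (fieldLipschitz Pt β * δ)| = fieldLipschitz Pt β * δ := by
    rcases hς with rfl | rfl <;> simp [abs_of_nonneg hK]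
  have h := abs_tiltedPhiF_iterate_sub_le hHT hη hcontr (ς * (fieldLipschitz Pt β * δ))
    (p := (1 + ς) / 2) (by rcases hς with rfl | rfl <;> norm_num) k
  rwa [habs] at h

lemma isStaircase_densityBound (hβ : IsFerromagnetic Pt β) (hς : ς = 1 ∨ ς = -1) (hδ : 0 ≤ δ)
    (hn : ∀ i, V i ≤ n ∧ 4 * (V i : ℝ) ^ 2 ≤ δ * n) :
    IsStaircase (updateProb Pt β n) ς (densityBound Pt β ς δ)
      (fun k => atypical V n ς (densityBound Pt β ς δ k) δ) (atypicalProb V n δ) where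
  sign := hς
  zero := rfl
  mem_Icc := densityBound_mem_Icc Pt β hς δ
  rate_le k x hx e := by
    have hfield := sign_mul_dH_sub_PsiF_le hβ hδ hx e
    rw [densityBound_succ]
    rcases hς with rfl | rfl
    · have hrate : updateProb Pt β n x e ≤ tiltedPhiF Pt β (1 * (fieldLipschitz Pt β * δ))
          (densityBound Pt β 1 δ k) := Real.sigmoid_le (by linarith)
      linarith
    · have hrate : tiltedPhiF Pt β (-1 * (fieldLipschitz Pt β * δ))
          (densityBound Pt β (-1) δ k) ≤ updateProb Pt β n x e := Real.sigmoid_le (by linarith)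
      linarith
  monotone_indicator _ := monotone_indicator_atypical hς
  prob_le k := bernoulliProd_dotProduct_indicator_atypical_le hς
    (densityBound_mem_Icc Pt β hς δ k) hn

lemma kernelStep_glauber_dotProduct (Pt : ∀ i, Finset (EdgeK (V i))) (β : Fin s → ℝ)
    (t : ℕ) (x : Config n) (f : Config n → ℝ) :
    kernelStep (glauber V Pt β n) t x ⬝ᵥ f = (heatBath (updateProb Pt β n) ^ t) f x :=
  kernelStep_dotProduct (fun x f => glauber_dotProduct x f) t x f

lemma mixes_of_heatBath_pow_sub_le [Nonempty (EdgeK n)] (hβ : IsFerromagnetic Pt β)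
    (h : ∀ f : Config n → ℝ, (∀ x, f x ∈ Set.Icc (0 : ℝ) 1) → ∀ x y,
      (heatBath (updateProb Pt β n) ^ t) f x - (heatBath (updateProb Pt β n) ^ t) f y ≤
        Real.exp (-1)) :
    mixes (glauber V Pt β n) (gibbs V Pt β n) t := by
  refine fun x => tvDist_le
    (kernelStep_mem_stdSimplex glauber_dotProduct (isAttractive_updateProb hβ).mem_Icc t x)
    gibbs_mem_stdSimplex fun f hf => ?_
  rw [kernelStep_glauber_dotProduct, ← gibbs_dotProduct_heatBath_pow t f, sub_le_comm]
  exact le_dotProduct_of_mem_stdSimplex gibbs_mem_stdSimplex fun y => sub_le_comm.1 (h f hf x y)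

lemma mixes_of_burnin_of_contraction [Nonempty (EdgeK n)] (hβ : IsFerromagnetic Pt β)
    (hκ : κ ∈ Set.Icc (0 : ℝ) 1) (hδ : 0 ≤ δ)
    (hcontr : ∀ x ∉ atypical V n (-1) (densityBound Pt β (-1) δ k) δ,
      ∀ y ∉ atypical V n 1 (densityBound Pt β 1 δ k) δ, x ≤ y →
        ∑ e, updateProb Pt β n y e - ∑ e, updateProb Pt β n x e ≤
          (1 - κ) * (numTrue y - numTrue x))
    (hn : ∀ i, V i ≤ n ∧ 4 * (V i : ℝ) ^ 2 ≤ δ * n) (hT : 1 ≤ T)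
    (hρ : Fintype.card (EdgeK n) * (1 - (Fintype.card (EdgeK n) : ℝ)⁻¹) ^ T ≤ ρ)
    (hfin : 2 * ((1 - κ / Fintype.card (EdgeK n)) ^ T' * Fintype.card (EdgeK n) +
      4 * T' * (2 * ((2 * T) ^ k * (atypicalProb V n δ + ρ)))) ≤ Real.exp (-1)) :
    mixes (glauber V Pt β n) (gibbs V Pt β n) (k * T + T') := by
  have hσ := isAttractive_updateProb (n := n) hβ
  set up := atypical V n 1 (densityBound Pt β 1 δ k) δ
  set lo := atypical V n (-1) (densityBound Pt β (-1) δ k) δ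
  have hup {r : ℕ} (hr : k * T ≤ r) :=
    (isStaircase_densityBound hβ (.inl rfl) hδ hn).heatBath_pow_indicator_le hσ.mem_Icc hT hρ hr
  have hlo {r : ℕ} (hr : k * T ≤ r) :=
    (isStaircase_densityBound hβ (.inr rfl) hδ hn).heatBath_pow_indicator_le hσ.mem_Icc hT hρ hr
  have hunion : ((up ∪ lo).indicator 1 : Config n → ℝ) ≤ up.indicator 1 + lo.indicator 1 := by
    rw [← Set.indicator_union_add_inter]
    exact le_add_of_nonneg_right (Set.indicator_nonneg fun _ _ => zero_le_one)
  refine mixes_of_heatBath_pow_sub_le hβ fun f hf x y => le_trans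
    (heatBath_pow_sub_le_of_contraction hσ hκ (B := up ∪ lo) (fun x hx y hy hxy =>
      hcontr x (fun h => hx (.inr h)) y (fun h => hy (.inl h)) hxy) (fun r hr x => ?_) T' hf x y)
    hfin
  have hsplit := heatBath_pow_mono hσ.mem_Icc r hunion x
  rw [map_add, Pi.add_apply] at hsplit
  linarith [hup hr x, hlo hr x]

lemma one_le_of_mixes [Nonempty (EdgeK n)] (hβ : IsFerromagnetic Pt β) (hδ : 0 ≤ δ)
    (hn : ∀ i, V i ≤ n ∧ 4 * (V i : ℝ) ^ 2 ≤ δ * n) (hT : 1 ≤ T)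
    (hρ : Fintype.card (EdgeK n) * (1 - (Fintype.card (EdgeK n) : ℝ)⁻¹) ^ T ≤ ρ)
    (hmix : mixes (glauber V Pt β n) (gibbs V Pt β n) t) (hd : 0 < d)
    (hdrift : densityBound Pt β 1 δ k * Fintype.card (EdgeK n) + d + d ≤
      densityBound Pt β (-1) δ (k + 1) * Fintype.card (EdgeK n) +
        (1 - densityBound Pt β (-1) δ (k + 1)) * Fintype.card (EdgeK n) *
          (1 - (Fintype.card (EdgeK n) : ℝ)⁻¹) ^ t) :
    1 ≤ Real.exp (-1) + t / d ^ 2 + (t + 1) * ((2 * T) ^ k * (atypicalProb V n δ + ρ)) +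
      Real.exp (-(d ^ 2 / (2 * Fintype.card (EdgeK n)))) := by
  have hσ := isAttractive_updateProb (n := n) hβ
  set θ := densityBound Pt β 1 δ k * Fintype.card (EdgeK n) + d with hθ
  set dense := ({x | θ ≤ numTrue x} : Set (Config n)).indicator (1 : Config n → ℝ) with hdense
  have hlow := (isStaircase_densityBound hβ (.inr rfl) hδ hn).heatBath_pow_numTrue_lt_le
    (k := k) hσ hT hρ hd hdrift
  have hup := (isStaircase_densityBound hβ (.inl rfl) hδ hn).dotProduct_le_numTrue_le
    hσ.mem_Icc hT hρ gibbs_mem_stdSimplex gibbs_dotProduct_heatBath_pow hd.le hθ.ge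
  have htv := (dotProduct_sub_le_tvDist
    (kernelStep_mem_stdSimplex glauber_dotProduct hσ.mem_Icc t ⊤) gibbs_mem_stdSimplex
    (indicator_one_mem_Icc {x | θ ≤ numTrue x})).trans (hmix ⊤)
  have hcompl : ({x | numTrue x < θ} : Set (Config n)).indicator 1 = 1 - dense := by
    rw [hdense, ← Set.indicator_compl]
    simp only [Set.compl_def, Set.mem_ofPred_eq, not_le]
  rw [kernelStep_glauber_dotProduct] at htv
  rw [hcompl, map_sub, Pi.sub_apply] at hlow
  have hone : (heatBath (updateProb Pt β n) ^ t) 1 ⊤ = 1 :=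
    congrFun (heatBath_pow_const _ 1 t) ⊤
  linarith

end NonAsymptotic

section UpperBound

variable {s : ℕ} {V : Fin s → ℕ} {Pt : ∀ i, Finset (EdgeK (V i))} {β : Fin s → ℝ}
  {a k n : ℕ} {pstar κ δ M z : ℝ}

lemma one_sub_pow_le_exp_neg (hz : z ≤ 1) (t : ℕ) : (1 - z) ^ t ≤ Real.exp (-(t * z)) := by
  rw [← mul_neg, Real.exp_nat_mul]
  exact pow_le_pow_left₀ (sub_nonneg.2 hz) (Real.one_sub_le_exp_neg z) t

lemma one_sub_div_pow_le_inv_pow (hκ : κ ∈ Set.Icc (0 : ℝ) 1) (hM : 1 ≤ M)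
    (hMn : M ≤ (n : ℝ) ^ 2) (hn : 0 < n) {b : ℕ} (hb : (b : ℝ) ≤ κ * a) :
    (1 - κ / M) ^ (a * n ^ 2 * ⌈Real.log n⌉₊) ≤ ((n : ℝ) ^ b)⁻¹ := by
  have hM₀ : 0 < M := by linarith
  have hexp : b * Real.log n ≤ (a * n ^ 2 * ⌈Real.log n⌉₊ : ℕ) * (κ / M) := by
    push_cast
    calc b * Real.log n ≤ κ * a * ⌈Real.log n⌉₊ :=
          mul_le_mul hb (Nat.le_ceil _) (Real.log_natCast_nonneg n)
            (mul_nonneg hκ.1 a.cast_nonneg)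
      _ = κ * a * ⌈Real.log n⌉₊ * (M / M) := by rw [div_self hM₀.ne', mul_one]
      _ ≤ κ * a * ⌈Real.log n⌉₊ * ((n : ℝ) ^ 2 / M) := by
          have := hκ.1
          gcongr
      _ = a * (n : ℝ) ^ 2 * ⌈Real.log n⌉₊ * (κ / M) := by ring
  calc (1 - κ / M) ^ (a * n ^ 2 * ⌈Real.log n⌉₊)
      ≤ Real.exp (-((a * n ^ 2 * ⌈Real.log n⌉₊ : ℕ) * (κ / M))) :=
        one_sub_pow_le_exp_neg (div_le_one_of_le₀ (hκ.2.trans hM) hM₀.le) _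
    _ ≤ Real.exp (-(b * Real.log n)) := Real.exp_le_exp.2 (neg_le_neg hexp)
    _ = ((n : ℝ) ^ b)⁻¹ := by
        rw [Real.exp_neg, Real.exp_nat_mul, Real.exp_log (Nat.cast_pos.2 hn)]

lemma one_sub_div_pow_mul_le (hκ : κ ∈ Set.Icc (0 : ℝ) 1) (hM : 1 ≤ M)
    (hMn : M ≤ (n : ℝ) ^ 2) (hn : 0 < n) {b : ℕ} (hb : (b + 2 : ℕ) ≤ κ * a) :
    (1 - κ / M) ^ (a * n ^ 2 * ⌈Real.log n⌉₊) * M ≤ ((n : ℝ) ^ b)⁻¹ := by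
  have hn₀ : (n : ℝ) ≠ 0 := Nat.cast_ne_zero.2 hn.ne'
  calc (1 - κ / M) ^ (a * n ^ 2 * ⌈Real.log n⌉₊) * M
      ≤ ((n : ℝ) ^ (b + 2))⁻¹ * (n : ℝ) ^ 2 :=
        mul_le_mul (one_sub_div_pow_le_inv_pow hκ hM hMn hn hb) hMn (by linarith) (by positivity)
    _ = ((n : ℝ) ^ b)⁻¹ := by
        rw [pow_add]
        field_simp

lemma mul_sq_mul_ceil_log_le (a n : ℕ) :
    ((a * n ^ 2 * ⌈Real.log n⌉₊ : ℕ) : ℝ) ≤ a * (n : ℝ) ^ 3 := by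
  have hceil : ⌈Real.log n⌉₊ ≤ n := Nat.ceil_le.2 (Real.log_le_self n.cast_nonneg)
  calc ((a * n ^ 2 * ⌈Real.log n⌉₊ : ℕ) : ℝ) ≤ (a * n ^ 2 * n : ℕ) := by gcongr
    _ = a * (n : ℝ) ^ 3 := by
        push_cast
        ring

lemma card_edgeK_le_sq (n : ℕ) : (Fintype.card (EdgeK n) : ℝ) ≤ (n : ℝ) ^ 2 := by
  rw [card_edgeK]
  exact_mod_cast n.choose_le_pow 2

lemma eventually_size_le (V : Fin s → ℕ) (hδ : 0 < δ) :
    ∀ᶠ n : ℕ in atTop, ∀ i, V i ≤ n ∧ 4 * (V i : ℝ) ^ 2 ≤ δ * n :=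
  eventually_all.2 fun i => (eventually_ge_atTop (V i)).and
    ((tendsto_natCast_atTop_atTop.const_mul_atTop hδ).eventually_ge_atTop _)

lemma tendsto_pow_mul_atypicalProb (V : Fin s → ℕ) (hδ : 0 < δ) (m : ℕ) :
    Tendsto (fun n : ℕ => (n : ℝ) ^ m * atypicalProb V n δ) atTop (𝓝 0) := by
  have hrate : 0 < δ ^ 2 / (8 * influenceBound V) :=
    div_pos (pow_pos hδ 2) (mul_pos (by norm_num) (influenceBound_pos V))
  have h := ((tendsto_rpow_mul_exp_neg_mul_atTop_nhds_zero (m + 2 : ℕ) _ hrate).comp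
    tendsto_natCast_atTop_atTop).const_mul (numRootedPatterns V : ℝ)
  rw [mul_zero] at h
  refine h.congr fun n => ?_
  rw [Function.comp_apply, Real.rpow_natCast, atypicalProb,
    show -(δ ^ 2 / (8 * influenceBound V)) * (n : ℝ) =
      -(δ ^ 2 * n / (8 * influenceBound V)) by ring]
  ring

/-- The bound on the total variation distance at the end of `k` burn-in phases and one
contraction phase, all of length `a * n ^ 2 * ⌈log n⌉`. -/
def mixingError (V : Fin s → ℕ) (δ : ℝ) (a k n : ℕ) : ℝ :=
  2 * (((n : ℝ) ^ (3 * k + 4))⁻¹ +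
    4 * (2 * (a * (n : ℝ) ^ 3)) ^ (k + 1) * (atypicalProb V n δ + ((n : ℝ) ^ (3 * k + 4))⁻¹))

lemma tendsto_mixingError (V : Fin s → ℕ) (hδ : 0 < δ) (a k : ℕ) :
    Tendsto (mixingError V δ a k) atTop (𝓝 0) := by
  have hinv (m : ℕ) : Tendsto (fun n : ℕ => ((n : ℝ) ^ (m + 1))⁻¹) atTop (𝓝 0) :=
    ((tendsto_pow_atTop m.succ_ne_zero).comp tendsto_natCast_atTop_atTop).inv_tendsto_atTop
  have h := ((hinv (3 * k + 3)).add (((tendsto_pow_mul_atypicalProb V hδ (3 * k + 3)).add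
    (hinv 0)).const_mul (4 * (2 * (a : ℝ)) ^ (k + 1)))).const_mul 2
  simp only [add_zero, mul_zero] at h
  refine h.congr' ((eventually_gt_atTop 0).mono fun n hn => ?_)
  have : (n : ℝ) ≠ 0 := Nat.cast_ne_zero.2 hn.ne'
  rw [mixingError]
  field_simp
  ring

lemma mixes_of_mixingError_le (hβ : IsFerromagnetic Pt β) (hκ : κ ∈ Set.Ioo (0 : ℝ) 1)
    (hδ : 0 ≤ δ)
    (hcontr : ∀ x ∉ atypical V n (-1) (densityBound Pt β (-1) δ k) δ,
      ∀ y ∉ atypical V n 1 (densityBound Pt β 1 δ k) δ, x ≤ y →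
        ∑ e, updateProb Pt β n y e - ∑ e, updateProb Pt β n x e ≤
          (1 - κ) * (numTrue y - numTrue x))
    (hn : ∀ i, V i ≤ n ∧ 4 * (V i : ℝ) ^ 2 ≤ δ * n) (hn₂ : 2 ≤ n)
    (ha : (3 * k + 6 : ℕ) ≤ κ * a) (herr : mixingError V δ a k n ≤ Real.exp (-1)) :
    mixes (glauber V Pt β n) (gibbs V Pt β n)
      (k * (a * n ^ 2 * ⌈Real.log n⌉₊) + a * n ^ 2 * ⌈Real.log n⌉₊) := by
  have := nonempty_edgeK hn₂
  have hκ' : κ ∈ Set.Icc (0 : ℝ) 1 := Set.Ioo_subset_Icc_self hκ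
  have hM : (1 : ℝ) ≤ Fintype.card (EdgeK n) := Nat.one_le_cast.2 Fintype.card_pos
  set T := a * n ^ 2 * ⌈Real.log n⌉₊
  have hdecay {c : ℝ} (hc : c ∈ Set.Icc κ 1) :
      (1 - c / Fintype.card (EdgeK n)) ^ T * Fintype.card (EdgeK n) ≤
        ((n : ℝ) ^ (3 * k + 4))⁻¹ :=
    one_sub_div_pow_mul_le ⟨hκ'.1.trans hc.1, hc.2⟩ hM (card_edgeK_le_sq n)
      (zero_lt_two.trans_le hn₂) (ha.trans (mul_le_mul_of_nonneg_right hc.1 a.cast_nonneg))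
  have hTn : (T : ℝ) ≤ a * (n : ℝ) ^ 3 := mul_sq_mul_ceil_log_le a n
  have hτ : 0 ≤ atypicalProb V n δ := by
    unfold atypicalProb
    positivity
  refine mixes_of_burnin_of_contraction hβ hκ' hδ hcontr hn ?_
    (ρ := ((n : ℝ) ^ (3 * k + 4))⁻¹) ?_ (le_trans ?_ herr)
  · have hlog : 0 < Real.log n := Real.log_pos (Nat.one_lt_cast.2 hn₂)
    have ha₀ : 0 < a := Nat.pos_of_ne_zero fun h => by
      rw [h, Nat.cast_zero, mul_zero] at ha
      exact absurd ha (not_le.2 (by positivity))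
    exact Nat.one_le_iff_ne_zero.2 (by positivity)
  · simpa only [one_div, mul_comm] using hdecay ⟨hκ'.2, le_rfl⟩
  · rw [mixingError]
    gcongr 2 * (?_ + ?_)
    · exact hdecay ⟨le_rfl, hκ'.2⟩
    · calc 4 * (T : ℝ) * (2 * ((2 * T) ^ k * (atypicalProb V n δ + ((n : ℝ) ^ (3 * k + 4))⁻¹)))
          = 4 * (2 * T) ^ (k + 1) * (atypicalProb V n δ + ((n : ℝ) ^ (3 * k + 4))⁻¹) := by ring
        _ ≤ _ := by gcongr

lemma exists_eventually_mixes (hβ : IsFerromagnetic Pt β) (hHT : HighTemp Pt β pstar) :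
    ∃ C > 0, ∀ᶠ n : ℕ in atTop, ∃ t : ℕ, mixes (glauber V Pt β n) (gibbs V Pt β n) t ∧
      t ≤ C * (n : ℝ) ^ 2 * Real.log n := by
  obtain ⟨η, hη, hφ⟩ := exists_abs_phiF_sub_le hβ hHT
  obtain ⟨κ, hκ, r, hr, hcontr⟩ := exists_sum_updateProb_sub_le hβ hHT
  obtain ⟨k, hk⟩ := exists_pow_lt_of_lt_one (half_pos hr) (sub_lt_self 1 hη.1)
  obtain ⟨a, ha⟩ := exists_nat_ge ((3 * k + 6 : ℕ) / κ)
  rw [div_le_iff₀' hκ.1] at ha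
  have hK := fieldLipschitz_pos Pt β
  have hη₀ := hη.1
  set δ := r * η / (2 * fieldLipschitz Pt β) with hδ
  have hδ₀ : 0 < δ := by positivity
  have hKδ : fieldLipschitz Pt β * δ = r / 2 * η := by
    rw [hδ]
    field_simp
  have hnear {ς : ℝ} (hς : ς = 1 ∨ ς = -1) : |densityBound Pt β ς δ k - pstar| ≤ r := by
    have h := abs_densityBound_sub_le hHT hη hφ hς hδ₀.le k
    rw [hKδ, mul_div_cancel_right₀ _ hη₀.ne'] at h
    linarith
  refine ⟨2 * (k + 1) * a + 1, by positivity, ?_⟩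
  filter_upwards [eventually_size_le V hδ₀, eventually_ge_atTop 2,
    (tendsto_mixingError V hδ₀ a k).eventually_le_const (Real.exp_pos _)] with n hn hn₂ herr
  refine ⟨_, mixes_of_mixingError_le hβ hκ hδ₀.le (hcontr n _ _ δ (by lia) (hnear (.inl rfl))
    (hnear (.inr rfl)) hδ₀.le (by nlinarith [hη.2])) hn hn₂ ha herr, ?_⟩
  have hlog : 2⁻¹ ≤ Real.log n :=
    le_trans (by linarith [Real.log_two_gt_d9]) (Real.log_le_log two_pos (Nat.ofNat_le_cast.2 hn₂))
  calc _ = (k + 1) * a * (n : ℝ) ^ 2 * ⌈Real.log n⌉₊ := by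
        push_cast
        ring
    _ ≤ (k + 1) * a * (n : ℝ) ^ 2 * (2 * Real.log n) := by
        gcongr
        exact Nat.ceil_le_two_mul hlog
    _ ≤ (2 * (k + 1) * a + 1) * (n : ℝ) ^ 2 * Real.log n := by
        linarith [mul_nonneg (sq_nonneg (n : ℝ)) (Real.log_natCast_nonneg n)]

end UpperBound

section LowerBound

variable {s : ℕ} {V : Fin s → ℕ} {Pt : ∀ i, Finset (EdgeK (V i))} {β : Fin s → ℝ}
  {k n t : ℕ} {pstar η x z b C K M R p q u w : ℝ}

lemma exp_neg_two_mul_le_one_sub (hz : z ∈ Set.Icc (0 : ℝ) 2⁻¹) :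
    Real.exp (-(2 * z)) ≤ 1 - z := by
  have hz₁ : 0 < 1 - z := by linarith [hz.2]
  rw [Real.exp_neg, inv_le_comm₀ (Real.exp_pos _) hz₁]
  refine le_trans ?_ (Real.add_one_le_exp (2 * z))
  rw [inv_le_iff_one_le_mul₀ hz₁]
  nlinarith [hz.1, hz.2]

lemma inv_le_one_sub_inv_pow (hx : 0 < x) (hM : 2 ≤ M) (ht : 2 * t ≤ M * Real.log x) :
    x⁻¹ ≤ (1 - M⁻¹) ^ t := by
  have hM₀ : 0 < M := by linarith
  have hexp : (t : ℝ) * (2 * M⁻¹) ≤ Real.log x := by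
    rw [← mul_assoc, mul_comm (t : ℝ), ← div_eq_mul_inv, div_le_iff₀' hM₀]
    exact ht
  calc x⁻¹ = Real.exp (-Real.log x) := by rw [Real.exp_neg, Real.exp_log hx]
    _ ≤ Real.exp (t * -(2 * M⁻¹)) := Real.exp_le_exp.2 (by linarith)
    _ = Real.exp (-(2 * M⁻¹)) ^ t := Real.exp_nat_mul _ _
    _ ≤ (1 - M⁻¹) ^ t := pow_le_pow_left₀ (Real.exp_pos _).le (exp_neg_two_mul_le_one_sub
        ⟨inv_nonneg.2 hM₀.le, inv_anti₀ two_pos hM⟩) t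

lemma one_sub_pow_le_inv_sq (hη : η ∈ Set.Ioo (0 : ℝ) 1) (hx : 0 < x)
    (hk : 2 / η * Real.log x ≤ k) : (1 - η) ^ k ≤ (x ^ 2)⁻¹ := by
  have hexp : 2 * Real.log x ≤ k * η := by
    rw [div_mul_eq_mul_div, div_le_iff₀ hη.1] at hk
    exact hk
  calc (1 - η) ^ k ≤ Real.exp (-(k * η)) := one_sub_pow_le_exp_neg hη.2.le k
    _ ≤ Real.exp (-(2 : ℕ) * Real.log x) := Real.exp_le_exp.2 (by push_cast; linarith)
    _ = (x ^ 2)⁻¹ := by rw [neg_mul, Real.exp_neg, Real.exp_nat_mul, Real.exp_log hx]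

lemma mul_one_sub_inv_pow_le (hM : 1 ≤ M) (hMn : M ≤ (n : ℝ) ^ 2) :
    M * (1 - M⁻¹) ^ n ^ 4 ≤ (n : ℝ) ^ 2 * Real.exp (-(n : ℝ) ^ 2) := by
  have hM₀ : 0 < M := by linarith
  have hinv : M⁻¹ ≤ 1 := inv_le_one_of_one_le₀ hM
  refine mul_le_mul hMn ((one_sub_pow_le_exp_neg hinv _).trans (Real.exp_le_exp.2 ?_))
    (pow_nonneg (sub_nonneg.2 hinv) _) (sq_nonneg _)
  rw [neg_le_neg_iff, ← div_eq_mul_inv, le_div_iff₀ hM₀]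
  push_cast
  calc (n : ℝ) ^ 2 * M ≤ (n : ℝ) ^ 2 * (n : ℝ) ^ 2 := by gcongr
    _ = (n : ℝ) ^ 4 := by ring

lemma sq_div_four_le_card_edgeK (hn : 2 ≤ n) :
    (n : ℝ) ^ 2 / 4 ≤ Fintype.card (EdgeK n) := by
  rw [card_edgeK, Nat.cast_choose_two]
  have hn' : (2 : ℝ) ≤ n := Nat.ofNat_le_cast.2 hn
  nlinarith

lemma mul_add_two_mul_pow_le (hx : 1 ≤ x) (hM : x ^ 16 / 4 ≤ M) (hu : |u - p| ≤ R * (x ^ 2)⁻¹)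
    (hq : |q - p| ≤ R * (x ^ 2)⁻¹) (hq₁ : q ≤ 1) (hw : x⁻¹ ≤ w)
    (hp : 3 * R + 8 ≤ (1 - p) * x) :
    u * M + x ^ 14 + x ^ 14 ≤ q * M + (1 - q) * M * w := by
  have : 0 < x := by linarith
  have hM₀ : 0 ≤ M := le_trans (by positivity) hM
  have hRx : 0 ≤ R * (x ^ 2)⁻¹ := (abs_nonneg _).trans hu
  have hfluct : x ^ 14 + x ^ 14 ≤ 8 * (x ^ 2)⁻¹ * M := by
    calc x ^ 14 + x ^ 14 = 8 * (x ^ 2)⁻¹ * (x ^ 16 / 4) := by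
          field_simp
          norm_num
      _ ≤ 8 * (x ^ 2)⁻¹ * M := by gcongr
  have hgap : 3 * (R * (x ^ 2)⁻¹) + 8 * (x ^ 2)⁻¹ ≤ (1 - p) * x⁻¹ := by
    calc _ = (3 * R + 8) * (x ^ 2)⁻¹ := by ring
      _ ≤ (1 - p) * x * (x ^ 2)⁻¹ := by gcongr
      _ = (1 - p) * x⁻¹ := by field_simp
  have hrate : (1 - p) * x⁻¹ - R * (x ^ 2)⁻¹ ≤ (1 - q) * w := by
    calc (1 - p) * x⁻¹ - R * (x ^ 2)⁻¹ ≤ (1 - p) * x⁻¹ - R * (x ^ 2)⁻¹ * x⁻¹ := by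
          linarith [mul_le_of_le_one_right hRx (inv_le_one_of_one_le₀ hx)]
      _ = (1 - p - R * (x ^ 2)⁻¹) * x⁻¹ := by ring
      _ ≤ (1 - q) * x⁻¹ :=
          mul_le_mul_of_nonneg_right (by linarith [(abs_le.1 hq).2]) (by positivity)
      _ ≤ (1 - q) * w := mul_le_mul_of_nonneg_left hw (sub_nonneg.2 hq₁)
  have hdrift : u - q + 8 * (x ^ 2)⁻¹ ≤ (1 - q) * w := by
    linarith [(abs_le.1 hu).2, (abs_le.1 hq).1]
  linarith [mul_le_mul_of_nonneg_right hdrift hM₀]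

lemma densityBound_mul_add_le (hHT : HighTemp Pt β pstar) (hη : η ∈ Set.Ioo (0 : ℝ) 1)
    (hφ : ∀ p ∈ Set.Icc (0 : ℝ) 1, |phiF Pt β p - pstar| ≤ (1 - η) * |p - pstar|)
    (hx : 1 ≤ x) (hM : 2 ≤ M) (hxM : x ^ 16 / 4 ≤ M) (hk : 2 / η * Real.log x ≤ k)
    (ht : 2 * t ≤ M * Real.log x)
    (hp : 3 * (1 + fieldLipschitz Pt β / η) + 8 ≤ (1 - pstar) * x) :
    densityBound Pt β 1 (x ^ 2)⁻¹ k * M + x ^ 14 + x ^ 14 ≤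
      densityBound Pt β (-1) (x ^ 2)⁻¹ (k + 1) * M +
        (1 - densityBound Pt β (-1) (x ^ 2)⁻¹ (k + 1)) * M * (1 - M⁻¹) ^ t := by
  have hx₀ : 0 < x := by linarith
  have hnear {ς : ℝ} (hς : ς = 1 ∨ ς = -1) {m : ℕ} (hm : k ≤ m) :
      |densityBound Pt β ς (x ^ 2)⁻¹ m - pstar| ≤
        (1 + fieldLipschitz Pt β / η) * (x ^ 2)⁻¹ := by
    have hpow := one_sub_pow_le_inv_sq hη hx₀ (hk.trans (Nat.cast_le.2 hm))
    have h := abs_densityBound_sub_le hHT hη hφ hς (inv_nonneg.2 (sq_nonneg x)) m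
    rw [add_mul, one_mul, div_mul_eq_mul_div]
    linarith
  exact mul_add_two_mul_pow_le hx hxM (hnear (.inl rfl) le_rfl) (hnear (.inr rfl) k.le_succ)
    (densityBound_mem_Icc Pt β (.inr rfl) _ _).2 (inv_le_one_sub_inv_pow hx₀ hM ht) hp

lemma exp_neg_le_inv (hz : 0 < z) : Real.exp (-z) ≤ z⁻¹ := by
  rw [Real.exp_neg]
  exact inv_anti₀ hz (by linarith [Real.add_one_le_exp z])

lemma fluctuationError_lt (hx : 100 ≤ x) (ht : t ≤ x ^ 17) (hM : 0 < M) (hMx : M ≤ x ^ 16) :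
    Real.exp (-1) + t / (x ^ 14) ^ 2 + Real.exp (-((x ^ 14) ^ 2 / (2 * M))) < 9 / 10 := by
  have : 0 < x := by linarith
  have hinv : x⁻¹ ≤ 100⁻¹ := inv_anti₀ (by norm_num) hx
  have hcheb : t / (x ^ 14) ^ 2 ≤ x⁻¹ := by
    rw [div_le_iff₀ (by positivity)]
    calc (t : ℝ) ≤ x ^ 17 := ht
      _ ≤ x ^ 27 := pow_le_pow_right₀ (by linarith) (by norm_num)
      _ = x⁻¹ * (x ^ 14) ^ 2 := by field_simp
  have hhoeffding : Real.exp (-((x ^ 14) ^ 2 / (2 * M))) ≤ 2 * x⁻¹ := by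
    calc Real.exp (-((x ^ 14) ^ 2 / (2 * M))) ≤ ((x ^ 14) ^ 2 / (2 * M))⁻¹ :=
          exp_neg_le_inv (by positivity)
      _ ≤ ((x ^ 14) ^ 2 / (2 * x ^ 16))⁻¹ := by gcongr
      _ = 2 * (x ^ 12)⁻¹ := by field_simp
      _ ≤ 2 * x⁻¹ := by
          gcongr
          exact le_self_pow₀ (by linarith) (by norm_num)
  linarith [Real.exp_neg_one_lt_d9]

lemma two_mul_pow_pow_le_exp (hx : 1 ≤ Real.log x) (hx₂ : 2 ≤ x)
    (hk : k ≤ C * Real.log x + 1) :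
    (2 * x ^ 32) ^ k ≤ Real.exp (33 * (C + 1) * Real.log x ^ 2) := by
  have hx₀ : 0 < x := by linarith
  have hbase : 2 * x ^ 32 ≤ Real.exp ((33 : ℕ) * Real.log x) := by
    rw [Real.exp_nat_mul, Real.exp_log hx₀, pow_succ' x 32]
    gcongr
  calc (2 * x ^ 32) ^ k ≤ Real.exp ((33 : ℕ) * Real.log x) ^ k :=
        pow_le_pow_left₀ (by positivity) hbase k
    _ = Real.exp (k * (33 * Real.log x)) := by
        rw [← Real.exp_nat_mul]
        push_cast
        rfl
    _ ≤ Real.exp ((C + 1) * Real.log x * (33 * Real.log x)) := by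
        have hk' : k ≤ (C + 1) * Real.log x := by linarith
        gcongr
    _ = _ := by ring_nf

lemma pow_le_exp_mul_log_sq (hx : 1 ≤ Real.log x) (hx₀ : 0 < x) (m : ℕ) :
    x ^ m ≤ Real.exp (m * Real.log x ^ 2) := by
  rw [← Real.exp_log (pow_pos hx₀ m), Real.log_pow]
  gcongr
  exact le_self_pow₀ hx two_ne_zero

lemma burninError_le (hK : 0 ≤ K) (hx : 1 ≤ Real.log x) (hx₂ : 2 ≤ x)
    (hb : b * x ^ 4 ≤ x ^ 16) (hk : k ≤ C * Real.log x + 1) (ht : t + 1 ≤ x ^ 17) :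
    (t + 1) * ((2 * x ^ 32) ^ k * (K * x ^ 16 * Real.exp (-(b * x ^ 4)) +
        x ^ 16 * Real.exp (-x ^ 16))) ≤
      (K + 1) * Real.exp (33 * (C + 2) * Real.log x ^ 2 - b * x ^ 4) := by
  have hx₀ : 0 < x := by linarith
  calc _ ≤ x ^ 17 * (Real.exp (33 * (C + 1) * Real.log x ^ 2) *
        (K * x ^ 16 * Real.exp (-(b * x ^ 4)) + x ^ 16 * Real.exp (-(b * x ^ 4)))) := by
        gcongr
        exact two_mul_pow_pow_le_exp hx hx₂ hk
    _ = (K + 1) * (x ^ 33 * Real.exp (33 * (C + 1) * Real.log x ^ 2) *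
        Real.exp (-(b * x ^ 4))) := by ring
    _ ≤ (K + 1) * (Real.exp ((33 : ℕ) * Real.log x ^ 2) *
        Real.exp (33 * (C + 1) * Real.log x ^ 2) * Real.exp (-(b * x ^ 4))) := by
        gcongr
        exact pow_le_exp_mul_log_sq hx hx₀ 33
    _ = (K + 1) * Real.exp (33 * (C + 2) * Real.log x ^ 2 - b * x ^ 4) := by
        rw [← Real.exp_add, ← Real.exp_add]
        push_cast
        ring_nf

lemma eventually_burninError_le (hC : 0 ≤ C) (hK : 0 ≤ K) (hb : 0 < b) :
    ∀ᶠ x : ℝ in atTop, ∀ k t : ℕ, k ≤ C * Real.log x + 1 → t + 1 ≤ x ^ 17 →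
      (t + 1) * ((2 * x ^ 32) ^ k * (K * x ^ 16 * Real.exp (-(b * x ^ 4)) +
        x ^ 16 * Real.exp (-x ^ 16))) ≤ 1 / 10 := by
  have hlog := (Real.isLittleO_pow_log_id_atTop (n := 2)).bound
    (show 0 < (33 * (C + 2))⁻¹ by positivity)
  have htail := (Real.tendsto_exp_neg_atTop_nhds_zero.const_mul (K + 1)).eventually_le_const
    (show (K + 1) * 0 < 1 / 10 by norm_num)
  filter_upwards [hlog, htail, Real.tendsto_log_atTop.eventually_ge_atTop 1,
    eventually_ge_atTop 2, eventually_ge_atTop b, eventually_ge_atTop (2 / b)]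
    with x hlog htail hlog₁ hx hbx hbx' k t hk ht
  have hx₁ : 1 ≤ x := by linarith
  have hx₀ : 0 < x := by linarith
  rw [id, Real.norm_of_nonneg hx₀.le, Real.norm_of_nonneg (sq_nonneg _),
    ← div_eq_inv_mul, le_div_iff₀' (by positivity)] at hlog
  have hrate : b * x ^ 4 ≤ x ^ 16 := by
    calc b * x ^ 4 ≤ x ^ 12 * x ^ 4 := by
          gcongr
          exact hbx.trans (le_self_pow₀ hx₁ (by norm_num))
      _ = x ^ 16 := by ring
  have hgrowth : 2 * x ≤ b * x ^ 4 := by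
    rw [div_le_iff₀' hb] at hbx'
    calc 2 * x ≤ b * x * x := by gcongr
      _ = b * x ^ 2 := by ring
      _ ≤ b * x ^ 4 := by
          gcongr
          norm_num
  refine (burninError_le hK hlog₁ hx hrate hk ht).trans (le_trans ?_ htail)
  gcongr
  linarith

lemma atypicalProb_inv_sq (hx : 0 < x) (hn : (n : ℝ) = x ^ 8) :
    atypicalProb V n (x ^ 2)⁻¹ =
      numRootedPatterns V * x ^ 16 * Real.exp (-((8 * influenceBound V)⁻¹ * x ^ 4)) := by
  rw [atypicalProb, hn]
  have hx' : ((x ^ 2)⁻¹) ^ 2 * x ^ 8 = x ^ 4 := by field_simp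
  rw [hx', ← pow_mul, div_eq_inv_mul]

-- The fluctuations are of order `n`, the gap between the density after `k` phases and its limit
-- is of order `x ^ (-2) = n ^ (-1 / 4)`, and from the complete graph the number of edges stays
-- at least `x ^ (-1) n ^ 2` above its limit until time `n ^ 2 log n / 64`.
lemma le_of_mixes (hβ : IsFerromagnetic Pt β) (hHT : HighTemp Pt β pstar)
    (hη : η ∈ Set.Ioo (0 : ℝ) 1)
    (hφ : ∀ p ∈ Set.Icc (0 : ℝ) 1, |phiF Pt β p - pstar| ≤ (1 - η) * |p - pstar|)
    (hn : (n : ℝ) = x ^ 8) (hx : 100 ≤ x)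
    (hV : ∀ i, V i ≤ n ∧ 4 * (V i : ℝ) ^ 2 ≤ x)
    (hp : 3 * (1 + fieldLipschitz Pt β / η) + 8 ≤ (1 - pstar) * x)
    (herr : ∀ k t : ℕ, k ≤ 2 / η * Real.log x + 1 → t + 1 ≤ x ^ 17 →
      (t + 1) * ((2 * x ^ 32) ^ k * (numRootedPatterns V * x ^ 16 *
        Real.exp (-((8 * influenceBound V)⁻¹ * x ^ 4)) + x ^ 16 * Real.exp (-x ^ 16))) ≤ 1 / 10)
    (hmix : mixes (glauber V Pt β n) (gibbs V Pt β n) t) :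
    x ^ 16 * Real.log x / 8 ≤ t := by
  have hx₁ : 1 ≤ x := by linarith
  have hx₀ : 0 < x := by linarith
  have hη₀ := hη.1
  have hlog : 0 ≤ Real.log x := Real.log_nonneg hx₁
  have hn₂ : 2 ≤ n := by
    have : x ≤ n := hn ▸ le_self_pow₀ hx₁ (by norm_num)
    exact_mod_cast (by linarith : (2 : ℝ) ≤ n)
  have := nonempty_edgeK hn₂
  have hnx : (n : ℝ) ^ 2 = x ^ 16 := by rw [hn, ← pow_mul]
  have hMx := card_edgeK_le_sq n
  have hxM := sq_div_four_le_card_edgeK hn₂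
  rw [hnx] at hMx hxM
  have hx16 : x ≤ x ^ 16 := le_self_pow₀ hx₁ (by norm_num)
  by_contra! hlt
  have ht : (t : ℝ) + 1 ≤ x ^ 17 := by
    have hx17 : x ^ 16 * Real.log x ≤ x ^ 17 := by
      rw [pow_succ x 16]
      gcongr
      exact Real.log_le_self hx₀.le
    linarith [le_self_pow₀ hx₁ (show 17 ≠ 0 by norm_num)]
  have hdrift := densityBound_mul_add_le (t := t) hHT hη hφ hx₁ (by linarith) hxM (Nat.le_ceil _)
    (by nlinarith [mul_le_mul_of_nonneg_right hxM hlog]) hp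
  have hsize (i : Fin s) : V i ≤ n ∧ 4 * (V i : ℝ) ^ 2 ≤ (x ^ 2)⁻¹ * n := by
    refine ⟨(hV i).1, (hV i).2.trans ?_⟩
    rw [hn, show (x ^ 2)⁻¹ * x ^ 8 = x ^ 6 by field_simp]
    exact le_self_pow₀ hx₁ (by norm_num)
  have hone := one_le_of_mixes hβ (inv_nonneg.2 (sq_nonneg x)) hsize
    (Nat.one_le_pow 4 n (by lia)) (mul_one_sub_inv_pow_le (by linarith) (card_edgeK_le_sq n))
    hmix (pow_pos hx₀ 14) hdrift
  rw [atypicalProb_inv_sq hx₀ hn, hnx, Nat.cast_pow, hn, ← pow_mul x 8 4] at hone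
  linarith [herr _ t (Nat.ceil_lt_add_one (by positivity)).le ht,
    fluctuationError_lt hx (by linarith) (by linarith) hMx (t := t)]

lemma eventually_le_of_mixes (hβ : IsFerromagnetic Pt β) (hHT : HighTemp Pt β pstar) :
    ∀ᶠ n : ℕ in atTop, ∀ t : ℕ, mixes (glauber V Pt β n) (gibbs V Pt β n) t →
      1 / 64 * (n : ℝ) ^ 2 * Real.log n ≤ t := by
  obtain ⟨η, hη, hφ⟩ := exists_abs_phiF_sub_le hβ hHT
  have hη₀ := hη.1
  have hpstar : 0 < 1 - pstar := by
    rw [← hHT.2.1, phiF_eq_sigmoid_comp]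
    exact sub_pos.2 (Real.sigmoid_lt_one _)
  have hinf := influenceBound_pos V
  have hroot : Tendsto (fun n : ℕ => (n : ℝ) ^ (8⁻¹ : ℝ)) atTop atTop :=
    (tendsto_rpow_atTop (by norm_num)).comp tendsto_natCast_atTop_atTop
  filter_upwards [eventually_all.2 fun i => eventually_ge_atTop (V i),
    hroot.eventually_ge_atTop 100,
    hroot.eventually (eventually_all.2 fun i => eventually_ge_atTop (4 * (V i : ℝ) ^ 2)),
    hroot.eventually ((tendsto_id.const_mul_atTop hpstar).eventually_ge_atTop
      (3 * (1 + fieldLipschitz Pt β / η) + 8)),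
    hroot.eventually (eventually_burninError_le (show 0 ≤ 2 / η by positivity)
      (numRootedPatterns V).cast_nonneg
      (show 0 < (8 * influenceBound V)⁻¹ by positivity))] with n hVn hx hVx hp herr t hmix
  have hn : (n : ℝ) = ((n : ℝ) ^ (8⁻¹ : ℝ)) ^ 8 :=
    (Real.rpow_inv_natCast_pow n.cast_nonneg (by norm_num)).symm
  have h := le_of_mixes hβ hHT hη hφ hn hx (fun i => ⟨hVn i, hVx i⟩) hp herr hmix
  set x := (n : ℝ) ^ (8⁻¹ : ℝ)
  calc 1 / 64 * (n : ℝ) ^ 2 * Real.log n = x ^ 16 * Real.log x / 8 := by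
        rw [hn, Real.log_pow]
        push_cast
        ring
    _ ≤ (t : ℝ) := h

end LowerBound

end ERGM

end

/-- **High temperature (Theorem 1).** In the high temperature phase the mixing time of the
Glauber dynamics for the exponential random graph model is `Θ(n² log n)`. -/
theorem high_temperature_mixing_time
    {L s : ℕ} (hL : 2 ≤ L) (hs : 0 < s)
    (V : Fin s → ℕ) (Pt : ∀ i, Finset (EdgeK (V i))) (β : Fin s → ℝ)
    (hV2 : ∀ i, 2 ≤ V i) (hVL : ∀ i, V i ≤ L)
    (hG1V : V ⟨0, hs⟩ = 2) (hG1E : (Pt ⟨0, hs⟩).card = 1)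
    (hβ : ∀ i : Fin s, 0 < (i : ℕ) → 0 < β i)
    (pstar : ℝ) (hHT : HighTemp Pt β pstar) :
    ∃ c C : ℝ, 0 < c ∧ 0 < C ∧ ∃ N : ℕ, ∀ n ≥ N,
      c * (n : ℝ) ^ 2 * Real.log n ≤
          (mixingTime (glauber V Pt β n) (gibbs V Pt β n) : ℝ) ∧
        (mixingTime (glauber V Pt β n) (gibbs V Pt β n) : ℝ) ≤
          C * (n : ℝ) ^ 2 * Real.log n := by
  have hferro : ERGM.IsFerromagnetic Pt β := by
    intro i
    rcases Nat.eq_zero_or_pos (i : ℕ) with hi | hi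
    · obtain rfl : i = ⟨0, hs⟩ := Fin.ext hi
      exact .inr ⟨hG1V, hG1E⟩
    · exact .inl (hβ i hi).le
  obtain ⟨C, hC, hupper⟩ := ERGM.exists_eventually_mixes hferro hHT
  obtain ⟨N, hN⟩ := Filter.eventually_atTop.1
    (hupper.and (ERGM.eventually_le_of_mixes hferro hHT))
  refine ⟨1 / 64, C, by norm_num, hC, N, fun n hn => ?_⟩
  obtain ⟨⟨t, hmix, ht⟩, hlower⟩ := hN n hn
  have hne : {t | mixes (glauber V Pt β n) (gibbs V Pt β n) t}.Nonempty := ⟨t, hmix⟩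
  exact ⟨hlower _ (Nat.sInf_mem hne), (Nat.cast_le.2 (Nat.sInf_le hmix)).trans ht⟩
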